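/- arXiv:0708.2853 — 3 statements merged into one kernel-verified Lean document; each statement's English description precedes it below -/
import Mathlib

section
/- In the recursive construction, the set A = ⋃_{k=0}^∞ A_k satisfies r_{A,h}(n) = f(n) for all integers n. -/
/-!
The set `A` is built so that every visit of the sequence `zseq` to an integer `n` with too few
representations adds exactly one: the two adjoined elements satisfy `(h - 1) u + v = n`. Since
`zseq` visits every integer infinitely often, the number of representations of `n` reaches `f n`,
finite or not (`exists_le_mrep`). It remains to see that no step creates unwanted representations
beyond `f` (`Aseq_invariant`); the bound passes to the union because finitely many representations
by `A` already live in some `A_k` (`exists_subset_mrep`).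

Write `R = 2 ^ r` and `E = m_k / R ^ 2`, so that `u = -E R` and `v = (h - 1) E R + z_k`. All elements
of `A_{k-1}` are within `E` of multiples of `m_k = E R ^ 2` (`near_Aseq`): those coming from `B`
because of the `2 r` zeros inserted below the binary position of `m_k`, the others because they are
small. Hence a sum of `h` elements, of which `s` equal `u`, `t` equal `v` and the others lie in
`A_{k-1}`, is `E R (R q + (h - 1) t - s)` up to an error of at most `h E`. As `R > 2 (h ^ 2 + n0)`,
the sum determines `(h - 1) t - s`, hence `(s, t)`, with the only ambiguity between `(0, 0)` and
`(h - 1, 1)` (`StepParams.class_eq`). For `(s, t)` other than these two, the sum has absolute value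
at least `n0` (`StepParams.le_abs`), where `f ≥ g`, and the number of such representations is a
number of representations by `A_{k-1}` of order less than `h`, which stays at most `g` throughout
the construction (`StepParams.low_order`). The class `(h - 1, 1)` consists of the single intended
representation of `z_k`. This gives `StepParams.upper`.

For `A_0` the bound `g` is inherited from `B`: the inserted zeros prevent carries between blocks, so
a sum of `h` transformed numbers determines the sum of the original ones
(`sum_eq_of_sum_insZeros_eq`).
-/

open Filter Set Pointwise

/-- The Inserting Zeros Transformation: if `b = Σ_i ε_i 2^i` in binary, then
`insZeros γ r b = Σ_{k≥0} 2^{2rk} Σ_{i=γ(k)}^{γ(k+1)-1} ε_i 2^i`.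
(Since `γ` is strictly increasing with `γ 0 = 0`, all binary digits of `b`
have index `< γ (b+1)`, so the sum over `k ∈ [0, b]` captures all of them.) -/
def insZeros (γ : ℕ → ℕ) (r : ℕ) (b : ℕ) : ℕ :=
  ∑ k ∈ Finset.range (b + 1),
    2 ^ (2 * r * k) * ∑ i ∈ Finset.Ico (γ k) (γ (k + 1)), (b / 2 ^ i % 2) * 2 ^ i

/-- `repFn A h n` is the number of representations of `n` in the form
`n = a 0 + ⋯ + a (h-1)` with `a 0 ≤ ⋯ ≤ a (h-1)` and all `a i ∈ A`;
values lie in `ℕ ∪ {∞}`. -/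
noncomputable def repFn (A : Set ℤ) (h : ℕ) (n : ℤ) : ℕ∞ :=
  {a : Fin h → ℤ | Monotone a ∧ (∀ i, a i ∈ A) ∧ ∑ i, a i = n}.encard

/-- `repFnN B h n`: the representation function of order `h` for a set of naturals. -/
noncomputable def repFnN (B : Set ℕ) (h : ℕ) (n : ℕ) : ℕ∞ :=
  {a : Fin h → ℕ | Monotone a ∧ (∀ i, a i ∈ B) ∧ ∑ i, a i = n}.encard

/-- `zseq j = j - ⌊√j⌋(⌊√j⌋ + 1)`. -/
def zseq (j : ℕ) : ℤ := (j : ℤ) - (Nat.sqrt j : ℤ) * ((Nat.sqrt j : ℤ) + 1)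

/-- `m_k = 2^{2rk + γ(k)}`. -/
def mval (γ : ℕ → ℕ) (r k : ℕ) : ℤ := 2 ^ (2 * r * k + γ k)

/-- `u_{2k-1} = -m_k·2^{-r}` (the division is exact for `k ≥ 1`). -/
def u1 (γ : ℕ → ℕ) (r k : ℕ) : ℤ := -(mval γ r k / 2 ^ r)

/-- `u_{2k} = (h-1)·m_k·2^{-r} + z_k` (the division is exact for `k ≥ 1`). -/
def u2 (γ : ℕ → ℕ) (r h k : ℕ) : ℤ := ((h : ℤ) - 1) * (mval γ r k / 2 ^ r) + zseq k

open Classical in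
/-- The recursive construction: `A_0 = {a ∈ T_γ^r(B) : a ≥ n_0}` and, for `k ≥ 1`,
`A_k = A_{k-1} ∪ {u_{2k-1}, u_{2k}}` if `r_{A_{k-1},h}(z_k) < f(z_k)`, else `A_k = A_{k-1}`. -/
noncomputable def Aseq (γ : ℕ → ℕ) (r h n0 : ℕ) (f : ℤ → ℕ∞) (B : Set ℕ) : ℕ → Set ℤ
  | 0 => {a : ℤ | (∃ b ∈ B, (insZeros γ r b : ℤ) = a) ∧ (n0 : ℤ) ≤ a}
  | k + 1 =>
    if repFn (Aseq γ r h n0 f B k) h (zseq (k + 1)) < f (zseq (k + 1)) then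
      Aseq γ r h n0 f B k ∪ {u1 γ r (k + 1), u2 γ r h (k + 1)}
    else Aseq γ r h n0 f B k

/-- The `m`-fold sumset of `A` (equal to `{0}` when `m = 0`). -/
def nSumset (A : Set ℤ) : ℕ → Set ℤ
  | 0 => {0}
  | m + 1 => A + nSumset A m

/-- `A_k^{(s,t)} = (h-s-t)·A_{k-1} + s·u_{2k-1} + t·u_{2k}`. -/
noncomputable def Ast (γ : ℕ → ℕ) (r h n0 : ℕ) (f : ℤ → ℕ∞) (B : Set ℕ)
    (k s t : ℕ) : Set ℤ :=
  (fun x => x + (s : ℤ) * u1 γ r k + (t : ℤ) * u2 γ r h k) ''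
    nSumset (Aseq γ r h n0 f B (k - 1)) (h - s - t)

/-! ### Representations as multisets -/

/-- The multisets of `h` elements of `A` with sum `n`: the representations of `n` counted without
reference to an ordering of the summands. -/
def mrep {α : Type*} [AddCommMonoid α] (A : Set α) (h : ℕ) (n : α) : Set (Multiset α) :=
  {M | Multiset.card M = h ∧ (∀ x ∈ M, x ∈ A) ∧ M.sum = n}

/-- Sorting identifies monotone `h`-tuples with multisets of size `h`. -/
lemma encard_tuples_eq {α : Type*} [AddCommMonoid α] [LinearOrder α] (A : Set α) (h : ℕ) (n : α) :
    {a : Fin h → α | Monotone a ∧ (∀ i, a i ∈ A) ∧ ∑ i, a i = n}.encard =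
      (mrep A h n).encard := by
  have hinj : Set.InjOn (fun a : Fin h → α => (↑(List.ofFn a) : Multiset α))
      {a : Fin h → α | Monotone a ∧ (∀ i, a i ∈ A) ∧ ∑ i, a i = n} := by
    intro a ha b hb hab
    have hp : (List.ofFn a).Perm (List.ofFn b) := Multiset.coe_eq_coe.mp hab
    exact List.ofFn_injective (hp.eq_of_sortedLE ha.1.sortedLE_ofFn hb.1.sortedLE_ofFn)
  rw [← hinj.encard_image]
  congr 1
  ext M
  constructor
  · rintro ⟨a, ⟨-, h2, h3⟩, rfl⟩
    refine ⟨by simp, ?_, by simpa [List.sum_ofFn] using h3⟩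
    intro x hx
    obtain ⟨i, rfl⟩ : ∃ i, a i = x := by simpa [List.mem_ofFn] using hx
    exact h2 i
  · rintro ⟨rfl, h2, h3⟩
    have hl : (M.sort (· ≤ ·)).length = Multiset.card M := Multiset.length_sort _
    have hM : (↑(M.sort (· ≤ ·)) : Multiset α) = M := Multiset.sort_eq ..
    have hs : (M.sort (· ≤ ·)).SortedLE := (Multiset.pairwise_sort M (· ≤ ·)).sortedLE
    generalize hL : M.sort (· ≤ ·) = L at hl hM hs
    subst hM
    have hof : List.ofFn
        (fun i : Fin (Multiset.card (↑L : Multiset α)) => L.get (i.cast hl.symm)) = L := by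
      apply List.ext_get
      · simp
      · intro n h1 h2
        simp
    refine ⟨fun i => L.get (i.cast hl.symm), ⟨?_, ?_, ?_⟩, ?_⟩
    · rw [← List.sortedLE_ofFn_iff, hof]; exact hs
    · intro i; exact h2 _ (by simp)
    · rw [← List.sum_ofFn, hof]; simpa using h3
    · exact congrArg _ hof

lemma repFn_eq (A : Set ℤ) (h : ℕ) (n : ℤ) : repFn A h n = (mrep A h n).encard :=
  encard_tuples_eq A h n

lemma repFnN_eq (A : Set ℕ) (h : ℕ) (n : ℕ) : repFnN A h n = (mrep A h n).encard :=
  encard_tuples_eq A h n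

lemma mrep_mono {α : Type*} [AddCommMonoid α] {A A' : Set α} (hA : A ⊆ A') (h : ℕ) (n : α) :
    mrep A h n ⊆ mrep A' h n :=
  fun _ hM => ⟨hM.1, fun x hx => hA (hM.2.1 x hx), hM.2.2⟩

/-- A `B_h[g]` set is a `B_m[g]` set for every `m ≤ h`: pad each representation by `h - m` copies
of a fixed element. -/
lemma mrep_le_of_le {B : Set ℕ} {h g : ℕ} (hg : 1 ≤ g) (hB : ∀ n, (mrep B h n).encard ≤ g)
    {m : ℕ} (hm : m ≤ h) (n : ℕ) : (mrep B m n).encard ≤ g := by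
  rcases B.eq_empty_or_nonempty with rfl | ⟨b, hb⟩
  · have : mrep (∅ : Set ℕ) m n ⊆ {0} := by
      intro M hM
      exact Multiset.eq_zero_of_forall_notMem fun x hx => hM.2.1 x hx
    calc _ ≤ ({0} : Set (Multiset ℕ)).encard := Set.encard_le_encard this
      _ = 1 := Set.encard_singleton _
      _ ≤ g := by exact_mod_cast hg
  · refine le_trans ?_ (hB (n + (h - m) * b))
    have hinj : Set.InjOn (fun M : Multiset ℕ => M + Multiset.replicate (h - m) b) (mrep B m n) :=
      fun M _ M' _ hMM => by simpa using hMM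
    rw [← hinj.encard_image]
    apply Set.encard_le_encard
    rintro _ ⟨M, ⟨h1, h2, h3⟩, rfl⟩
    refine ⟨by simp [h1]; omega, ?_, by simp [h3]⟩
    intro x hx
    rcases Multiset.mem_add.mp hx with hx | hx
    · exact h2 x hx
    · rw [Multiset.eq_of_mem_replicate hx]; exact hb

/-! ### The inserting zeros transformation -/

/-- The `k`-th block of binary digits of `b`, i.e. those with index in `[γ k, γ (k+1))`, read as a
number. -/
def dig (γ : ℕ → ℕ) (k b : ℕ) : ℕ := b / 2 ^ γ k % 2 ^ (γ (k + 1) - γ k)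

lemma mod_add_sum_Ico (b a c : ℕ) (hac : a ≤ c) :
    b % 2 ^ a + ∑ i ∈ Finset.Ico a c, (b / 2 ^ i % 2) * 2 ^ i = b % 2 ^ c := by
  induction c, hac using Nat.le_induction with
  | base => simp
  | succ c hc ih =>
    rw [Finset.sum_Ico_succ_top hc, Nat.mod_pow_succ, ← ih]; ring

lemma mod_pow_succ_dig {γ : ℕ → ℕ} (hγ : StrictMono γ) (k b : ℕ) :
    b % 2 ^ γ (k + 1) = b % 2 ^ γ k + 2 ^ γ k * dig γ k b := by
  have : (2 : ℕ) ^ γ (k + 1) = 2 ^ γ k * 2 ^ (γ (k + 1) - γ k) := by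
    rw [← pow_add]
    congr 1
    have := hγ (Nat.lt_succ_self k)
    simp only [Nat.succ_eq_add_one] at this
    omega
  rw [this, Nat.mod_mul]; rfl

lemma sum_block_eq_dig {γ : ℕ → ℕ} (hγ : StrictMono γ) (k b : ℕ) :
    ∑ i ∈ Finset.Ico (γ k) (γ (k + 1)), (b / 2 ^ i % 2) * 2 ^ i = 2 ^ γ k * dig γ k b := by
  have h1 := mod_add_sum_Ico b _ _ (hγ.monotone (Nat.le_succ k))
  have h2 := mod_pow_succ_dig hγ k b
  simp only [Nat.succ_eq_add_one] at h1
  omega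

lemma sum_dig {γ : ℕ → ℕ} (hγ : StrictMono γ) (hγ0 : γ 0 = 0) (K b : ℕ) :
    ∑ k ∈ Finset.range K, 2 ^ γ k * dig γ k b = b % 2 ^ γ K := by
  induction K with
  | zero => simp [hγ0, Nat.mod_one]
  | succ K ih => rw [Finset.sum_range_succ, ih, mod_pow_succ_dig hγ]

lemma lt_pow_gamma {γ : ℕ → ℕ} (hγ : StrictMono γ) {k b : ℕ} (h : b ≤ k) : b < 2 ^ γ k :=
  b.lt_two_pow_self.trans_le (Nat.pow_le_pow_right (by norm_num) (h.trans hγ.le_apply))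

lemma sum_dig_of_lt {γ : ℕ → ℕ} (hγ : StrictMono γ) (hγ0 : γ 0 = 0) {K b : ℕ} (h : b < K) :
    ∑ k ∈ Finset.range K, 2 ^ γ k * dig γ k b = b := by
  rw [sum_dig hγ hγ0, Nat.mod_eq_of_lt (lt_pow_gamma hγ h.le)]

lemma insZeros_eq {γ : ℕ → ℕ} (hγ : StrictMono γ) (r : ℕ) {K b : ℕ} (h : b < K) :
    insZeros γ r b = ∑ k ∈ Finset.range K, 2 ^ (2 * r * k + γ k) * dig γ k b := by
  have h1 : insZeros γ r b =
      ∑ k ∈ Finset.range (b + 1), 2 ^ (2 * r * k + γ k) * dig γ k b := by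
    unfold insZeros
    refine Finset.sum_congr rfl fun k _ => ?_
    rw [sum_block_eq_dig hγ]; ring
  rw [h1]
  refine Finset.sum_subset (Finset.range_mono h) fun k _ hk => ?_
  have hk' : b ≤ k := by simp at hk; omega
  simp [dig, Nat.div_eq_of_lt (lt_pow_gamma hγ hk')]

lemma pow_mval_succ {γ : ℕ → ℕ} (hγ : StrictMono γ) (r k : ℕ) :
    (2 : ℕ) ^ (2 * r * (k + 1) + γ (k + 1)) =
      2 ^ (2 * r * k + γ k) * (2 ^ (γ (k + 1) - γ k) * 2 ^ (2 * r)) := by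
  rw [← pow_add, ← pow_add]
  congr 1
  have := hγ (Nat.lt_succ_self k)
  simp only [Nat.succ_eq_add_one] at this
  rw [show 2 * r * (k + 1) = 2 * r * k + 2 * r by ring]
  omega

lemma dig_lt (γ : ℕ → ℕ) (k b : ℕ) : dig γ k b < 2 ^ (γ (k + 1) - γ k) :=
  Nat.mod_lt _ (by positivity)

/-- A number with digits `C k < d k` in the mixed radix system of weights `w` is below the next
weight. -/
lemma radix_lt {w d C : ℕ → ℕ} (hw : ∀ k, w (k + 1) = w k * d k) (hw0 : 0 < w 0)
    (hC : ∀ k, C k < d k) (K : ℕ) : ∑ k ∈ Finset.range K, w k * C k < w K := by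
  induction K with
  | zero => simpa
  | succ K ih =>
    rw [Finset.sum_range_succ, hw]
    calc _ < w K + w K * C K := by omega
      _ = w K * (C K + 1) := by ring
      _ ≤ w K * d K := Nat.mul_le_mul_left _ (hC K)

lemma radix_unique {w d C C' : ℕ → ℕ} (hw : ∀ k, w (k + 1) = w k * d k) (hw0 : 0 < w 0)
    (hC : ∀ k, C k < d k) (hC' : ∀ k, C' k < d k) (K : ℕ)
    (h : ∑ k ∈ Finset.range K, w k * C k = ∑ k ∈ Finset.range K, w k * C' k) :
    ∀ k < K, C k = C' k := by
  induction K with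
  | zero => intro k hk; omega
  | succ K ih =>
    rw [Finset.sum_range_succ, Finset.sum_range_succ] at h
    have h1 := radix_lt hw hw0 hC K
    have h2 := radix_lt hw hw0 hC' K
    have hpos : 0 < w K := by omega
    have hK : C K = C' K := by
      have e1 : (∑ k ∈ Finset.range K, w k * C k + w K * C K) / w K = C K := by
        rw [Nat.add_mul_div_left _ _ hpos, Nat.div_eq_of_lt h1, zero_add]
      have e2 : (∑ k ∈ Finset.range K, w k * C' k + w K * C' K) / w K = C' K := by
        rw [Nat.add_mul_div_left _ _ hpos, Nat.div_eq_of_lt h2, zero_add]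
      rw [← e1, h, e2]
    rw [hK] at h
    intro k hk
    rcases Nat.lt_succ_iff_lt_or_eq.mp hk with hk | rfl
    · exact ih (by omega) k hk
    · exact hK

lemma multiset_sum_finset_sum (M : Multiset ℕ) (K : ℕ) (w : ℕ → ℕ) (c : ℕ → ℕ → ℕ) :
    (M.map fun b => ∑ k ∈ Finset.range K, w k * c k b).sum =
      ∑ k ∈ Finset.range K, w k * (M.map (c k)).sum := by
  induction M using Multiset.induction with
  | empty => simp
  | cons a M ih => simp [ih, mul_add, Finset.sum_add_distrib]

/-- The sum of at most `2 ^ (2 * r)` transformed numbers determines the sum of the original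
numbers: the inserted zeros absorb all carries, so the sum is computed block by block. -/
lemma sum_eq_of_sum_insZeros_eq {γ : ℕ → ℕ} (hγ : StrictMono γ) (hγ0 : γ 0 = 0) {r : ℕ}
    {M M' : Multiset ℕ} (hM : Multiset.card M ≤ 2 ^ (2 * r))
    (hM' : Multiset.card M' ≤ 2 ^ (2 * r))
    (h : (M.map (insZeros γ r)).sum = (M'.map (insZeros γ r)).sum) : M.sum = M'.sum := by
  set K := M.sum + M'.sum + 1 with hK
  have hlt : ∀ b ∈ M, b < K := fun b hb => by
    have := Multiset.le_sum_of_mem hb; omega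
  have hlt' : ∀ b ∈ M', b < K := fun b hb => by
    have := Multiset.le_sum_of_mem hb; omega
  have hT : ∀ N : Multiset ℕ, (∀ b ∈ N, b < K) → (N.map (insZeros γ r)).sum =
      ∑ k ∈ Finset.range K, 2 ^ (2 * r * k + γ k) * (N.map (dig γ k)).sum := fun N hN => by
    rw [← multiset_sum_finset_sum]
    exact congrArg _ (Multiset.map_congr rfl fun b hb => insZeros_eq hγ r (hN b hb))
  have hS : ∀ N : Multiset ℕ, (∀ b ∈ N, b < K) → N.sum =
      ∑ k ∈ Finset.range K, 2 ^ γ k * (N.map (dig γ k)).sum := fun N hN => by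
    rw [← multiset_sum_finset_sum]
    conv_lhs => rw [← Multiset.map_id N]
    exact congrArg _ (Multiset.map_congr rfl fun b hb => (sum_dig_of_lt hγ hγ0 (hN b hb)).symm)
  have hbd : ∀ N : Multiset ℕ, Multiset.card N ≤ 2 ^ (2 * r) → ∀ k,
      (N.map (dig γ k)).sum < 2 ^ (γ (k + 1) - γ k) * 2 ^ (2 * r) := fun N hN k => by
    have h1 : (N.map (dig γ k)).sum ≤
        Multiset.card (N.map (dig γ k)) • (2 ^ (γ (k + 1) - γ k) - 1) := by
      apply Multiset.sum_le_card_nsmul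
      intro x hx
      obtain ⟨b, -, rfl⟩ := Multiset.mem_map.mp hx
      have := dig_lt γ k b; omega
    rw [Multiset.card_map, smul_eq_mul] at h1
    have hp : 0 < 2 ^ (γ (k + 1) - γ k) := by positivity
    have hq : 0 < 2 ^ (2 * r) := by positivity
    calc _ ≤ _ := h1
      _ ≤ 2 ^ (2 * r) * (2 ^ (γ (k + 1) - γ k) - 1) := Nat.mul_le_mul_right _ hN
      _ < 2 ^ (2 * r) * 2 ^ (γ (k + 1) - γ k) := Nat.mul_lt_mul_of_pos_left (by omega) hq
      _ = _ := mul_comm _ _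
  rw [hT M hlt, hT M' hlt'] at h
  have key := radix_unique (w := fun k => 2 ^ (2 * r * k + γ k)) (pow_mval_succ hγ r)
    (by positivity) (hbd M hM) (hbd M' hM') K h
  rw [hS M hlt, hS M' hlt']
  exact Finset.sum_congr rfl fun k hk => by rw [key k (Finset.mem_range.mp hk)]

/-- Up to an error of at most `2 ^ (2 * r * k + γ (k + 1)) = m_{k+1} / 2 ^ (2 * r)`, a transformed
number is a multiple of `m_{k+1}`. -/
lemma insZeros_near {γ : ℕ → ℕ} (hγ : StrictMono γ) (r k b : ℕ) :
    ∃ q e, insZeros γ r b = 2 ^ (2 * r * k + γ (k + 1)) * 2 ^ (2 * r) * q + e ∧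
      e ≤ 2 ^ (2 * r * k + γ (k + 1)) := by
  have hE : 2 ^ (2 * r * k + γ (k + 1)) * 2 ^ (2 * r) = 2 ^ (2 * r * (k + 1) + γ (k + 1)) := by
    rw [← pow_add]; congr 1; ring
  have hdvd : ∀ i, 2 ^ (2 * r * (k + 1) + γ (k + 1)) ∣
      2 ^ (2 * r * (k + 1 + i) + γ (k + 1 + i)) * dig γ (k + 1 + i) b := fun i => by
    apply Dvd.dvd.mul_right
    apply pow_dvd_pow
    have := hγ.monotone (Nat.le_add_right (k + 1) i)
    have : 2 * r * (k + 1) ≤ 2 * r * (k + 1 + i) := Nat.mul_le_mul_left _ (by omega)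
    omega
  rw [insZeros_eq hγ r (K := k + 1 + (b + 1)) (by omega), Finset.sum_range_add, hE]
  obtain ⟨q, hq⟩ := Finset.dvd_sum (s := Finset.range (b + 1)) fun i _ => hdvd i
  refine ⟨q, _, by rw [hq, add_comm], ?_⟩
  rw [Finset.sum_range_succ]
  have hlow : ∑ j ∈ Finset.range k, 2 ^ (2 * r * j + γ j) * dig γ j b < 2 ^ (2 * r * k + γ k) :=
    radix_lt (w := fun j => 2 ^ (2 * r * j + γ j)) (pow_mval_succ hγ r) (by positivity)
      (fun j => (dig_lt γ j b).trans_le (Nat.le_mul_of_pos_right _ (by positivity))) k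
  have hkk := hγ (Nat.lt_succ_self k)
  simp only [Nat.succ_eq_add_one] at hkk
  calc _ ≤ 2 ^ (2 * r * k + γ k) + 2 ^ (2 * r * k + γ k) * dig γ k b := by omega
    _ = 2 ^ (2 * r * k + γ k) * (dig γ k b + 1) := by ring
    _ ≤ 2 ^ (2 * r * k + γ k) * 2 ^ (γ (k + 1) - γ k) := Nat.mul_le_mul_left _ (dig_lt γ k b)
    _ = _ := by rw [← pow_add]; congr 1; omega

/-! ### Adjoining two elements to a set clustered around multiples of a modulus -/

/-- Every element of `A` lies within `E` of a multiple of `E * R ^ 2`. -/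
def Near (A : Set ℤ) (E R : ℤ) : Prop :=
  ∀ a ∈ A, ∃ q e : ℤ, a = E * R ^ 2 * q + e ∧ |e| ≤ E

lemma Near.sum {A : Set ℤ} {E R : ℤ} (hA : Near A E R) (M : Multiset ℤ) (hM : ∀ x ∈ M, x ∈ A) :
    ∃ q e : ℤ, M.sum = E * R ^ 2 * q + e ∧ |e| ≤ Multiset.card M * E := by
  induction M using Multiset.induction with
  | empty => exact ⟨0, 0, by simp, by simp⟩
  | cons a M ih =>
    obtain ⟨q, e, h1, h2⟩ := ih fun x hx => hM x (Multiset.mem_cons_of_mem hx)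
    obtain ⟨q', e', h1', h2'⟩ := hA a (hM a (Multiset.mem_cons_self a M))
    refine ⟨q' + q, e' + e, by rw [Multiset.sum_cons, h1, h1']; ring, ?_⟩
    rw [Multiset.card_cons]
    push_cast
    linarith [abs_add_le e' e]

/-- The value `M.sum + s * u + t * v` with `u = -E * R`, `v = (h - 1) * E * R + z`, written as
`E * R * (R * q + (h - 1) * t - s)` plus a small error. -/
lemma Near.sum_add {A : Set ℤ} {E R z : ℤ} {h : ℕ} (hA : Near A E R) (hz : |z| ≤ E)
    {M : Multiset ℤ} (hM : ∀ x ∈ M, x ∈ A) {s t : ℕ} (hst : Multiset.card M + s + t ≤ h) :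
    ∃ q e : ℤ, M.sum + s * (-(E * R)) + t * (((h : ℤ) - 1) * (E * R) + z) =
      E * R * (R * q + (((h : ℤ) - 1) * t - s)) + e ∧ |e| ≤ h * E := by
  obtain ⟨q, e, h1, h2⟩ := hA.sum M hM
  refine ⟨q, e + t * z, by rw [h1]; ring, ?_⟩
  have hE : 0 ≤ E := (abs_nonneg z).trans hz
  have h3 : |(t : ℤ) * z| ≤ t * E := by
    rw [abs_mul, Nat.abs_cast]; exact mul_le_mul_of_nonneg_left hz (by positivity)
  have h4 : ((Multiset.card M : ℤ) + t) * E ≤ h * E :=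
    mul_le_mul_of_nonneg_right (by exact_mod_cast (by omega : Multiset.card M + t ≤ h)) hE
  linarith [abs_add_le e (t * z)]

/-- The value of `(h - 1) * t - s` separates the pairs with `s + t ≤ h`, apart from the coincidence
of `(0, 0)` and `(h - 1, 1)`. -/
lemma class_of_eq {h s t s' t' : ℕ} (hh : 2 ≤ h) (hst : s + t ≤ h) (hst' : s' + t' ≤ h)
    (heq : ((h : ℤ) - 1) * t - s = ((h : ℤ) - 1) * t' - s') :
    (s = s' ∧ t = t') ∨ (s = 0 ∧ t = 0 ∧ s' = h - 1 ∧ t' = 1) ∨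
      (s' = 0 ∧ t' = 0 ∧ s = h - 1 ∧ t = 1) := by
  obtain ⟨k, rfl⟩ := Nat.exists_eq_add_of_le hh
  have e : ((k : ℤ) + 1) * (t - t') = s - s' := by push_cast at heq; linarith
  have hd : (t : ℤ) - t' = 0 ∨ (t : ℤ) - t' = 1 ∨ (t : ℤ) - t' = -1 ∨ 2 ≤ (t : ℤ) - t' ∨
      (t : ℤ) - t' ≤ -2 := by omega
  rcases hd with hd | hd | hd | hd | hd
  · rw [hd] at e; omega
  · rw [hd] at e; omega
  · rw [hd] at e; omega
  · have : ((k : ℤ) + 1) * 2 ≤ (k + 1) * (t - t') :=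
      mul_le_mul_of_nonneg_left hd (by positivity)
    omega
  · have : ((k : ℤ) + 1) * (t - t') ≤ (k + 1) * (-2) :=
      mul_le_mul_of_nonneg_left hd (by positivity)
    omega

lemma abs_class_sub_le {h s t s' t' : ℕ} (hh : 2 ≤ h) (hst : s + t ≤ h) (hst' : s' + t' ≤ h) :
    |(((h : ℤ) - 1) * t - s) - (((h : ℤ) - 1) * t' - s')| ≤ (h : ℤ) ^ 2 := by
  have hb : ∀ s t : ℕ, s + t ≤ h → -(h : ℤ) ≤ ((h : ℤ) - 1) * t - s ∧
      ((h : ℤ) - 1) * t - s ≤ ((h : ℤ) - 1) * h := fun s t hst => by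
    have h1 : 0 ≤ ((h : ℤ) - 1) * t := mul_nonneg (by omega) (by positivity)
    have h2 : ((h : ℤ) - 1) * t ≤ ((h : ℤ) - 1) * h :=
      mul_le_mul_of_nonneg_left (by omega) (by omega)
    constructor <;> omega
  have h1 := hb s t hst
  have h2 := hb s' t' hst'
  rw [abs_le]
  constructor <;> nlinarith

/-- The parameters of one step: `R` plays the role of `2 ^ r`, and `E * R ^ 2` that of `m_k`. -/
structure StepParams (h n0 : ℕ) (E R z : ℤ) : Prop where
  two_le : 2 ≤ h
  E_pos : 1 ≤ E
  z_le : |z| ≤ E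
  R_gt : 2 * ((h : ℤ) ^ 2 + n0) < R

lemma StepParams.four_mul_lt {h n0 : ℕ} {E R z : ℤ} (P : StepParams h n0 E R z) :
    4 * (h : ℤ) < R := by
  have := P.R_gt
  have := P.two_le
  nlinarith [sq_nonneg ((h : ℤ) - 1)]

lemma StepParams.sq_lt {h n0 : ℕ} {E R z : ℤ} (P : StepParams h n0 E R z) :
    (h : ℤ) ^ 2 < R := by
  have := P.R_gt
  nlinarith [sq_nonneg (h : ℤ)]

/-- The sets `(h - s - t) A + s u + t v` are pairwise disjoint apart from the coincidence of
`(0, 0)` and `(h - 1, 1)`. -/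
lemma StepParams.class_eq {h n0 : ℕ} {E R z : ℤ} (P : StepParams h n0 E R z) {A : Set ℤ}
    (hA : Near A E R) {M M' : Multiset ℤ} (hM : ∀ x ∈ M, x ∈ A) (hM' : ∀ x ∈ M', x ∈ A)
    {s t s' t' : ℕ} (hst : Multiset.card M + s + t ≤ h) (hst' : Multiset.card M' + s' + t' ≤ h)
    (heq : M.sum + s * (-(E * R)) + t * (((h : ℤ) - 1) * (E * R) + z) =
      M'.sum + s' * (-(E * R)) + t' * (((h : ℤ) - 1) * (E * R) + z)) :
    (s = s' ∧ t = t') ∨ (s = 0 ∧ t = 0 ∧ s' = h - 1 ∧ t' = 1) ∨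
      (s' = 0 ∧ t' = 0 ∧ s = h - 1 ∧ t = 1) := by
  apply class_of_eq P.two_le (by omega) (by omega)
  obtain ⟨q, e, h1, h2⟩ := hA.sum_add P.z_le hM hst
  obtain ⟨q', e', h1', h2'⟩ := hA.sum_add P.z_le hM' hst'
  rw [h1, h1'] at heq
  have hc := abs_class_sub_le P.two_le (by omega : s + t ≤ h) (by omega : s' + t' ≤ h)
  generalize ((h : ℤ) - 1) * t - s = j at *
  generalize ((h : ℤ) - 1) * t' - s' = j' at *
  have hE := P.E_pos
  have hR := P.four_mul_lt
  have hsq := P.sq_lt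
  -- Comparing errors: `E * R` divides a quantity smaller than `E * R`.
  have hX : R * (q - q') + (j - j') = 0 := by
    by_contra hne
    have h3 : 1 ≤ |R * (q - q') + (j - j')| := Int.one_le_abs hne
    have h4 : E * R * (R * (q - q') + (j - j')) = e' - e := by linarith
    have h5 : E * R * |R * (q - q') + (j - j')| = |e' - e| := by
      rw [← h4, abs_mul, abs_of_pos (by nlinarith : 0 < E * R)]
    have h6 : |e' - e| ≤ |e'| + |e| := abs_sub _ _
    have h7 : E * R ≤ |e' - e| := by rw [← h5]; nlinarith [show 0 < E * R by nlinarith]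
    nlinarith
  have hq : q - q' = 0 := by
    by_contra hne
    have h3 : 1 ≤ |q - q'| := Int.one_le_abs hne
    have h4 : R * (q - q') = -(j - j') := by linarith
    have h5 : R * |q - q'| = |j - j'| := by
      rw [← abs_neg (j - j'), ← h4, abs_mul, abs_of_pos (by nlinarith : 0 < R)]
    nlinarith
  rw [hq] at hX
  linarith

/-- The sets `(h - s - t) A + s u + t v` with `(s, t)` different from `(0, 0)` and `(h - 1, 1)`
avoid the interval `(-n0, n0)`. -/
lemma StepParams.le_abs {h n0 : ℕ} {E R z : ℤ} (P : StepParams h n0 E R z) {A : Set ℤ}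
    (hA : Near A E R) {M : Multiset ℤ} (hM : ∀ x ∈ M, x ∈ A)
    {s t : ℕ} (hst : Multiset.card M + s + t ≤ h) (h0 : ¬ (s = 0 ∧ t = 0))
    (h1 : ¬ (s = h - 1 ∧ t = 1)) :
    (n0 : ℤ) ≤ |M.sum + s * (-(E * R)) + t * (((h : ℤ) - 1) * (E * R) + z)| := by
  obtain ⟨q, e, h2, h3⟩ := hA.sum_add P.z_le hM hst
  have hj : ((h : ℤ) - 1) * t - s ≠ 0 := fun hj => by
    have := class_of_eq (s' := 0) (t' := 0) P.two_le (by omega : s + t ≤ h) (by omega)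
      (by simpa using hj)
    omega
  have hc := abs_class_sub_le (s' := 0) (t' := 0) P.two_le (by omega : s + t ≤ h) (by omega)
  simp only [Nat.cast_zero, mul_zero, sub_zero] at hc
  rw [h2]
  generalize ((h : ℤ) - 1) * t - s = j at *
  have hE := P.E_pos
  have hR := P.four_mul_lt
  have hsq := P.sq_lt
  have hgt := P.R_gt
  have hhh := P.two_le
  have hX : 1 ≤ |R * q + j| := by
    apply Int.one_le_abs
    intro h0
    have hq : q ≠ 0 := by rintro rfl; simp at h0; exact hj h0
    have h3 : 1 ≤ |q| := Int.one_le_abs hq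
    have h5 : R * |q| = |j| := by
      rw [← abs_neg j, ← (by linarith : R * q = -j), abs_mul, abs_of_pos (by nlinarith : 0 < R)]
    nlinarith
  have h5 : E * R * |R * q + j| = |E * R * (R * q + j)| := by
    rw [abs_mul, abs_of_pos (by nlinarith : 0 < E * R)]
  have h6 : E * R ≤ |E * R * (R * q + j)| := by
    rw [← h5]; nlinarith [show 0 < E * R by nlinarith]
  have h7 := abs_sub_abs_le_abs_sub (E * R * (R * q + j)) (-e)
  rw [sub_neg_eq_add, abs_neg] at h7
  have h8 : (n0 : ℤ) ≤ E * (R - h) := by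
    have : (n0 : ℤ) ≤ R - h := by nlinarith
    nlinarith
  linarith

/-- A multiset with elements in `A ∪ {u, v}` splits into a part in `A`, copies of `u` and copies
of `v`. -/
lemma exists_split {A : Set ℤ} {u v : ℤ} (M : Multiset ℤ) (hM : ∀ x ∈ M, x ∈ A ∪ {u, v}) :
    ∃ (N : Multiset ℤ) (s t : ℕ), (∀ x ∈ N, x ∈ A) ∧
      M = N + Multiset.replicate s u + Multiset.replicate t v := by
  induction M using Multiset.induction with
  | empty => exact ⟨0, 0, 0, by simp, by simp⟩
  | cons a M ih =>
    obtain ⟨N, s, t, hN, rfl⟩ := ih fun x hx => hM x (Multiset.mem_cons_of_mem hx)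
    rcases hM a (Multiset.mem_cons_self a _) with ha | rfl | rfl
    · refine ⟨a ::ₘ N, s, t, ?_, by simp⟩
      intro x hx
      rcases Multiset.mem_cons.mp hx with rfl | hx
      exacts [ha, hN x hx]
    · exact ⟨N, s + 1, t, hN, by simp [Multiset.replicate_succ]⟩
    · exact ⟨N, s, t + 1, hN, by simp [Multiset.replicate_succ]⟩

lemma mem_split {A : Set ℤ} {u v : ℤ} {m : ℕ} {n : ℤ} {M : Multiset ℤ}
    (hM : M ∈ mrep (A ∪ {u, v}) m n) :
    ∃ (N : Multiset ℤ) (s t : ℕ), (∀ x ∈ N, x ∈ A) ∧ Multiset.card N + s + t = m ∧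
      N.sum + s * u + t * v = n ∧ M = N + Multiset.replicate s u + Multiset.replicate t v := by
  obtain ⟨h1, h2, h3⟩ := hM
  obtain ⟨N, s, t, hN, rfl⟩ := exists_split M h2
  exact ⟨N, s, t, hN, by simpa using h1, by simpa using h3, rfl⟩

/-- If all representations of `n` by `A ∪ {u, v}` belong to the same class `(s, t)`, there are at
most as many of them as representations by `A` of the corresponding number. -/
lemma encard_le_of_class {A : Set ℤ} {u v : ℤ} {m s t : ℕ} {n : ℤ}
    (hcl : ∀ (N : Multiset ℤ) (s' t' : ℕ), (∀ x ∈ N, x ∈ A) → Multiset.card N + s' + t' = m →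
      N.sum + s' * u + t' * v = n → s' = s ∧ t' = t) :
    (mrep (A ∪ {u, v}) m n).encard ≤ (mrep A (m - s - t) (n - s * u - t * v)).encard := by
  refine le_trans (Set.encard_le_encard ?_) (Set.encard_image_le
    (fun N => N + Multiset.replicate s u + Multiset.replicate t v) _)
  intro M hM
  obtain ⟨N, s', t', hN, hc, hs, rfl⟩ := mem_split hM
  obtain ⟨rfl, rfl⟩ := hcl N s' t' hN hc hs
  exact ⟨N, ⟨by omega, hN, by linarith⟩, rfl⟩

/-- One step preserves the property of being a `B_m[g]` set, for every `m < h`. -/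
lemma StepParams.low_order {h n0 g : ℕ} {E R z : ℤ} (P : StepParams h n0 E R z) {A : Set ℤ}
    (hA : Near A E R) (hlow : ∀ m < h, ∀ n, (mrep A m n).encard ≤ g) {m : ℕ} (hm : m < h)
    (n : ℤ) :
    (mrep (A ∪ {-(E * R), ((h : ℤ) - 1) * (E * R) + z}) m n).encard ≤ g := by
  rcases Set.eq_empty_or_nonempty
    (mrep (A ∪ {-(E * R), ((h : ℤ) - 1) * (E * R) + z}) m n) with h0 | ⟨M, hM⟩
  · rw [h0]; simp
  obtain ⟨N, s, t, hN, hc, hs, -⟩ := mem_split hM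
  refine (encard_le_of_class (s := s) (t := t) ?_).trans (hlow _ (by omega) _)
  intro N' s' t' hN' hc' hs'
  have := P.class_eq hA hN' hN (s := s') (t := t') (s' := s) (t' := t) (by omega) (by omega)
    (hs'.trans hs.symm)
  omega

/-- One step at a number `z` with too few representations preserves the bound `f` on the number of
representations of order `h`. -/
lemma StepParams.upper {h n0 g : ℕ} {E R z : ℤ} (P : StepParams h n0 E R z) {A : Set ℤ}
    (hA : Near A E R) (hlow : ∀ m < h, ∀ n, (mrep A m n).encard ≤ g) {f : ℤ → ℕ∞}
    (hf : ∀ n : ℤ, (n0 : ℤ) ≤ |n| → (g : ℕ∞) ≤ f n) (hup : ∀ n, (mrep A h n).encard ≤ f n)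
    (hz : (mrep A h z).encard < f z) (n : ℤ) :
    (mrep (A ∪ {-(E * R), ((h : ℤ) - 1) * (E * R) + z}) h n).encard ≤ f n := by
  have hh := P.two_le
  by_cases hnz : n = z
  · subst hnz
    set M0 : Multiset ℤ := Multiset.replicate (h - 1) (-(E * R)) +
      Multiset.replicate 1 (((h : ℤ) - 1) * (E * R) + n) with hM0
    have hsub : mrep (A ∪ {-(E * R), ((h : ℤ) - 1) * (E * R) + n}) h n ⊆
        insert M0 (mrep A h n) := by
      intro M hM
      obtain ⟨N, s, t, hN, hc, hs, rfl⟩ := mem_split hM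
      have hz0 : N.sum + s * (-(E * R)) + t * (((h : ℤ) - 1) * (E * R) + n) =
          (0 : Multiset ℤ).sum + ((h - 1 : ℕ) : ℤ) * (-(E * R)) +
            (1 : ℕ) * (((h : ℤ) - 1) * (E * R) + n) := by
        rw [hs, Nat.cast_sub (by omega)]; simp
      have := P.class_eq hA hN (M' := 0) (by simp) (by omega) (by simp; omega) hz0
      rcases this with ⟨rfl, rfl⟩ | ⟨rfl, rfl, -, -⟩ | h3
      · left
        have hN0 : N = 0 := Multiset.card_eq_zero.mp (by omega)
        rw [hN0, zero_add]
      · right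
        exact ⟨by simpa using hc, by simpa using hN, by simpa using hs⟩
      · omega
    calc _ ≤ _ := Set.encard_le_encard hsub
      _ ≤ (mrep A h n).encard + 1 := Set.encard_insert_le _ _
      _ ≤ f n := Order.add_one_le_of_lt hz
  rcases Set.eq_empty_or_nonempty
    (mrep (A ∪ {-(E * R), ((h : ℤ) - 1) * (E * R) + z}) h n) with h0 | ⟨M, hM⟩
  · rw [h0]; simp
  obtain ⟨N, s, t, hN, hc, hs, -⟩ := mem_split hM
  -- The class `(h - 1, 1)` represents only `z`.
  have hne : ∀ (N : Multiset ℤ) (s t : ℕ), Multiset.card N + s + t = h →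
      N.sum + s * (-(E * R)) + t * (((h : ℤ) - 1) * (E * R) + z) = n →
      ¬ (s = h - 1 ∧ t = 1) := by
    rintro N s t hc hs ⟨rfl, rfl⟩
    have hN0 : N = 0 := Multiset.card_eq_zero.mp (by omega)
    apply hnz
    rw [← hs, hN0, Nat.cast_sub (by omega)]; simp
  have hn1 := hne N s t hc hs
  refine (encard_le_of_class (s := s) (t := t) ?_).trans ?_
  · intro N' s' t' hN' hc' hs'
    have := P.class_eq hA hN' hN (s := s') (t := t') (s' := s) (t' := t) (by omega) (by omega)
      (hs'.trans hs.symm)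
    have hn2 := hne N' s' t' hc' hs'
    omega
  · by_cases hst : s = 0 ∧ t = 0
    · obtain ⟨rfl, rfl⟩ := hst
      simpa using hup n
    · refine (hlow _ (by omega) _).trans (hf n ?_)
      rw [← hs]
      exact P.le_abs hA hN (by omega) hst hn1

/-- One step at `z` produces a new representation of `z`. -/
lemma StepParams.lower {h n0 : ℕ} {E R z : ℤ} (P : StepParams h n0 E R z) {A : Set ℤ}
    (hA : Near A E R) :
    (mrep A h z).encard + 1 ≤
      (mrep (A ∪ {-(E * R), ((h : ℤ) - 1) * (E * R) + z}) h z).encard := by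
  have hh := P.two_le
  set M0 : Multiset ℤ := Multiset.replicate (h - 1) (-(E * R)) +
    Multiset.replicate 1 (((h : ℤ) - 1) * (E * R) + z) with hM0
  have hu : -(E * R) ∉ A := fun hu => by
    have := P.class_eq hA (M := {-(E * R)}) (M' := 0) (s := 0) (t := 0) (s' := 1) (t' := 0)
      (by simpa using hu) (by simp) (by simp; omega) (by simp; omega) (by simp)
    omega
  have hnot : M0 ∉ mrep A h z := fun hM => hu (hM.2.1 _ (by
    rw [hM0, Multiset.mem_add]
    exact Or.inl (Multiset.mem_replicate.mpr ⟨by omega, rfl⟩)))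
  rw [← Set.encard_insert_of_notMem hnot]
  apply Set.encard_le_encard
  apply Set.insert_subset _ (mrep_mono Set.subset_union_left h z)
  refine ⟨by simp [hM0]; omega, ?_, ?_⟩
  · intro x hx
    rw [hM0, Multiset.mem_add] at hx
    rcases hx with hx | hx
    · rw [Multiset.eq_of_mem_replicate hx]; right; left; rfl
    · rw [Multiset.eq_of_mem_replicate hx]; right; right; rfl
  · simp only [hM0, Multiset.sum_add, Multiset.sum_replicate, one_smul, nsmul_eq_mul]
    rw [Nat.cast_sub (by omega)]; push_cast; ring

/-! ### The sequence of targets -/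

lemma abs_zseq_le (j : ℕ) : |zseq j| ≤ Nat.sqrt j := by
  have h1 := Nat.sqrt_le' j
  have h2 := Nat.sqrt_le_add j
  unfold zseq
  generalize Nat.sqrt j = s at *
  have h1' : (s : ℤ) ^ 2 ≤ j := by exact_mod_cast h1
  have h2' : (j : ℤ) ≤ s * s + s + s := by exact_mod_cast h2
  rw [abs_le]
  constructor <;> nlinarith

/-- Every integer occurs in `zseq` at arbitrarily large positive indices. -/
lemma exists_zseq (n : ℤ) (K : ℕ) : ∃ k, K ≤ k ∧ zseq (k + 1) = n := by
  set s := n.natAbs + K + 1 with hs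
  have hn : |n| = n.natAbs := (Int.natCast_natAbs n).symm
  obtain ⟨h1, h2⟩ := abs_le.mp hn.le
  -- On the block of indices `s ^ 2 + i` with `0 ≤ i ≤ 2 s`, `zseq` runs through `-s, ..., s`.
  obtain ⟨i, hi⟩ := Int.eq_ofNat_of_zero_le (show 0 ≤ s + n by omega)
  have hi2 : i ≤ s + s := by omega
  have hss : K + 1 ≤ s * s := by nlinarith [Nat.zero_le n.natAbs]
  refine ⟨s * s + i - 1, by omega, ?_⟩
  rw [Nat.sub_add_cancel (by omega)]
  unfold zseq
  rw [Nat.sqrt_add_eq s hi2]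
  push_cast
  linarith

/-! ### The recursive construction -/

lemma u1_succ (γ : ℕ → ℕ) (r k : ℕ) :
    u1 γ r (k + 1) = -((2 : ℤ) ^ (2 * r * k + γ (k + 1)) * 2 ^ r) := by
  unfold u1 mval
  rw [show 2 * r * (k + 1) + γ (k + 1) = 2 * r * k + γ (k + 1) + r + r by ring, pow_add _ _ r,
    Int.mul_ediv_cancel _ (by positivity), pow_add]

lemma u2_succ (γ : ℕ → ℕ) (r h k : ℕ) :
    u2 γ r h (k + 1) =
      ((h : ℤ) - 1) * ((2 : ℤ) ^ (2 * r * k + γ (k + 1)) * 2 ^ r) + zseq (k + 1) := by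
  have := u1_succ γ r k
  unfold u1 at this
  unfold u2
  rw [neg_inj.mp this]

lemma Aseq_subset_succ (γ : ℕ → ℕ) (r h n0 : ℕ) (f : ℤ → ℕ∞) (B : Set ℕ) (k : ℕ) :
    Aseq γ r h n0 f B k ⊆ Aseq γ r h n0 f B (k + 1) := by
  conv_rhs => rw [Aseq]
  split_ifs
  · exact Set.subset_union_left
  · exact subset_rfl

lemma Aseq_mono (γ : ℕ → ℕ) (r h n0 : ℕ) (f : ℤ → ℕ∞) (B : Set ℕ) :
    Monotone (Aseq γ r h n0 f B) :=
  monotone_nat_of_le_succ (Aseq_subset_succ γ r h n0 f B)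

lemma mem_Aseq {γ : ℕ → ℕ} {r h n0 : ℕ} {f : ℤ → ℕ∞} {B : Set ℕ} {k : ℕ} {a : ℤ}
    (ha : a ∈ Aseq γ r h n0 f B k) :
    a ∈ Aseq γ r h n0 f B 0 ∨ ∃ j < k, a = u1 γ r (j + 1) ∨ a = u2 γ r h (j + 1) := by
  induction k with
  | zero => exact Or.inl ha
  | succ k ih =>
    rw [Aseq] at ha
    split_ifs at ha
    · rcases ha with ha | ha
      · exact (ih ha).imp id fun ⟨j, hj, h⟩ => ⟨j, by omega, h⟩
      · exact Or.inr ⟨k, by omega, ha⟩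
    · exact (ih ha).imp id fun ⟨j, hj, h⟩ => ⟨j, by omega, h⟩

lemma stepParams {h n0 r : ℕ} (hh : 2 ≤ h) (hR : 2 * ((h : ℤ) ^ 2 + n0) < 2 ^ r) {γ : ℕ → ℕ}
    (hγ : StrictMono γ) (k : ℕ) :
    StepParams h n0 (2 ^ (2 * r * k + γ (k + 1))) (2 ^ r) (zseq (k + 1)) := by
  refine ⟨hh, one_le_pow₀ (by norm_num), (abs_zseq_le _).trans ?_, hR⟩
  have h1 : Nat.sqrt (k + 1) ≤ 2 ^ (2 * r * k + γ (k + 1)) :=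
    (Nat.sqrt_le_self _).trans ((lt_pow_gamma hγ le_rfl).le.trans
      (Nat.pow_le_pow_right (by norm_num) (by omega)))
  exact_mod_cast h1

/-- `A_k` is clustered around the multiples of `m_{k+1}`: the elements coming from `B` by the zeros
inserted before the digit block `k + 1`, and the previously adjoined elements by their size. -/
lemma near_Aseq {h n0 r : ℕ} (hh : 2 ≤ h) (hR : 2 * ((h : ℤ) ^ 2 + n0) < 2 ^ r) {γ : ℕ → ℕ}
    (hγ : StrictMono γ) (f : ℤ → ℕ∞) (B : Set ℕ) (k : ℕ) :
    Near (Aseq γ r h n0 f B k) (2 ^ (2 * r * k + γ (k + 1))) (2 ^ r) := by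
  intro a ha
  have hpos : (0 : ℤ) ≤ 2 ^ (2 * r * k + γ (k + 1)) := by positivity
  rcases mem_Aseq ha with ⟨⟨b, -, rfl⟩, -⟩ | ⟨j, hj, hu⟩
  · obtain ⟨q, e, h1, h2⟩ := insZeros_near hγ r k b
    refine ⟨q, e, ?_, ?_⟩
    · rw [h1, ← pow_mul, mul_comm r 2]; push_cast; ring
    · rw [Nat.abs_cast]; exact_mod_cast h2
  · refine ⟨0, a, by ring, ?_⟩
    have P := stepParams (n0 := n0) hh hR hγ j
    have hjk : (2 : ℤ) ^ (2 * r * j + γ (j + 1)) * (2 ^ r) ^ 2 ≤ 2 ^ (2 * r * k + γ (k + 1)) := by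
      rw [← pow_mul, ← pow_add]
      apply pow_le_pow_right₀ (by norm_num)
      have h1 := hγ.monotone (by omega : j + 1 ≤ k + 1)
      have h2 : 2 * r * (j + 1) ≤ 2 * r * k := Nat.mul_le_mul_left _ (by omega)
      have h3 : 2 * r * (j + 1) = 2 * r * j + r * 2 := by ring
      omega
    rw [u1_succ, u2_succ] at hu
    have hE := P.E_pos
    have hz := P.z_le
    have hh4 := P.four_mul_lt
    generalize (2 : ℤ) ^ (2 * r * j + γ (j + 1)) = E at *
    generalize (2 : ℤ) ^ r = R at *
    refine le_trans ?_ hjk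
    have hh' : (2 : ℤ) ≤ h := by exact_mod_cast hh
    have hER : 0 < E * R := by nlinarith
    have hbig : ((h : ℤ) - 1) * (E * R) + E ≤ E * R ^ 2 := by nlinarith
    rcases hu with rfl | rfl
    · rw [abs_neg, abs_of_pos hER]; nlinarith
    · refine (abs_add_le _ _).trans ?_
      rw [abs_of_nonneg (mul_nonneg (by omega) hER.le)]
      linarith

/-- `A_0` inherits from `B` the bound `g` on the number of representations of any order `m ≤ h`. -/
lemma mrep_Aseq_zero_le {h g n0 r : ℕ} (hg : 1 ≤ g) (hhr : h ≤ 2 ^ (2 * r)) {γ : ℕ → ℕ}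
    (hγ : StrictMono γ) (hγ0 : γ 0 = 0) (f : ℤ → ℕ∞) {B : Set ℕ}
    (hB : ∀ n : ℕ, (mrep B h n).encard ≤ g) {m : ℕ} (hm : m ≤ h) (n : ℤ) :
    (mrep (Aseq γ r h n0 f B 0) m n).encard ≤ g := by
  have hlift : ∀ M ∈ mrep (Aseq γ r h n0 f B 0) m n, ∃ M' : Multiset ℕ,
      M'.map (fun b => (insZeros γ r b : ℤ)) = M ∧ Multiset.card M' = m ∧ (∀ b ∈ M', b ∈ B) ∧
        (((M'.map (insZeros γ r)).sum : ℕ) : ℤ) = n := by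
    rintro M ⟨h1, h2, h3⟩
    have : ∃ M' : Multiset ℕ, M'.map (fun b => (insZeros γ r b : ℤ)) = M ∧ (∀ b ∈ M', b ∈ B) := by
      clear h1 h3
      induction M using Multiset.induction with
      | empty => exact ⟨0, by simp, by simp⟩
      | cons a M ih =>
        obtain ⟨M', rfl, hM'⟩ := ih fun x hx => h2 x (Multiset.mem_cons_of_mem hx)
        obtain ⟨⟨b, hb, rfl⟩, -⟩ := h2 a (Multiset.mem_cons_self a _)
        refine ⟨b ::ₘ M', by simp, ?_⟩
        intro x hx
        rcases Multiset.mem_cons.mp hx with rfl | hx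
        exacts [hb, hM' x hx]
    obtain ⟨M', rfl, hM'⟩ := this
    refine ⟨M', rfl, by simpa using h1, hM', ?_⟩
    rw [← h3, Nat.cast_multiset_sum, Multiset.map_map]
    rfl
  rcases Set.eq_empty_or_nonempty (mrep (Aseq γ r h n0 f B 0) m n) with h0 | ⟨M0, hM0⟩
  · rw [h0]; simp
  obtain ⟨N0, -, hc0, -, hs0⟩ := hlift M0 hM0
  refine le_trans (Set.encard_le_encard ?_) ((Set.encard_image_le
    (fun M' : Multiset ℕ => M'.map (fun b => (insZeros γ r b : ℤ))) _).trans
      (mrep_le_of_le hg hB hm N0.sum))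
  intro M hM
  obtain ⟨N, rfl, hc, hN, hs⟩ := hlift M hM
  exact ⟨N, ⟨hc, hN, sum_eq_of_sum_insZeros_eq (r := r) hγ hγ0 (by omega) (by omega)
    (by exact_mod_cast hs.trans hs0.symm)⟩, rfl⟩

/-- The invariants of the construction: `A_k` is a `B_m[g]` set for every `m < h`, and the number
of its representations of order `h` is bounded by `f`. -/
lemma Aseq_invariant {h g n0 r : ℕ} (hh : 2 ≤ h) (hg : 1 ≤ g)
    (hR : 2 * ((h : ℤ) ^ 2 + n0) < 2 ^ r) {γ : ℕ → ℕ} (hγ : StrictMono γ) (hγ0 : γ 0 = 0)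
    {f : ℤ → ℕ∞} (hf : ∀ n : ℤ, (n0 : ℤ) ≤ |n| → (g : ℕ∞) ≤ f n) {B : Set ℕ}
    (hB : ∀ n : ℕ, (mrep B h n).encard ≤ g) (k : ℕ) :
    (∀ m < h, ∀ n, (mrep (Aseq γ r h n0 f B k) m n).encard ≤ g) ∧
      ∀ n, (mrep (Aseq γ r h n0 f B k) h n).encard ≤ f n := by
  induction k with
  | zero =>
    have hhr : h ≤ 2 ^ (2 * r) := by
      have h1 := (stepParams (n0 := n0) hh hR hγ 0).four_mul_lt
      have h2 : 4 * h < 2 ^ r := by exact_mod_cast h1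
      have h3 : 2 ^ r ≤ 2 ^ (2 * r) := Nat.pow_le_pow_right (by norm_num) (by omega)
      omega
    refine ⟨fun m hm n => mrep_Aseq_zero_le hg hhr hγ hγ0 f hB hm.le n, fun n => ?_⟩
    rcases Set.eq_empty_or_nonempty (mrep (Aseq γ r h n0 f B 0) h n) with h0 | ⟨M, hM⟩
    · rw [h0]; simp
    -- A sum of `h` elements of `A_0` is at least `n0`, where `f` is at least `g`.
    · refine (mrep_Aseq_zero_le hg hhr hγ hγ0 f hB le_rfl n).trans
        (hf n (le_trans ?_ (le_abs_self n)))
      have h1 := Multiset.card_nsmul_le_sum (s := M) (a := (n0 : ℤ)) fun x hx => (hM.2.1 x hx).2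
      rw [hM.1, hM.2.2, nsmul_eq_mul] at h1
      have h2 : (2 : ℤ) ≤ h := by exact_mod_cast hh
      nlinarith
  | succ k ih =>
    rw [Aseq]
    split_ifs with hlt
    · rw [repFn_eq] at hlt
      rw [u1_succ, u2_succ]
      have P := stepParams (n0 := n0) hh hR hγ k
      have hA := near_Aseq (n0 := n0) hh hR hγ f B k
      exact ⟨fun m hm n => P.low_order hA ih.1 hm n, P.upper hA ih.1 hf ih.2 hlt⟩
    · exact ih

/-- A lower bound `N ≤ f n` is reached by the number of representations of `n`, since each visit of
`zseq` to `n` adds a representation as long as there are fewer than `f n` of them. -/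
lemma exists_le_mrep {h n0 r : ℕ} (hh : 2 ≤ h)
    (hR : 2 * ((h : ℤ) ^ 2 + n0) < 2 ^ r) {γ : ℕ → ℕ} (hγ : StrictMono γ)
    (f : ℤ → ℕ∞) (B : Set ℕ) (n : ℤ) (N : ℕ) (hN : (N : ℕ∞) ≤ f n) :
    ∃ k, (N : ℕ∞) ≤ (mrep (Aseq γ r h n0 f B k) h n).encard := by
  induction N with
  | zero => exact ⟨0, by simp⟩
  | succ N ih =>
    obtain ⟨k, hk⟩ := ih (le_trans (by exact_mod_cast Nat.le_succ N) hN)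
    obtain ⟨k', hk', rfl⟩ := exists_zseq n k
    have hk2 : (N : ℕ∞) ≤ (mrep (Aseq γ r h n0 f B k') h (zseq (k' + 1))).encard :=
      hk.trans (Set.encard_le_encard (mrep_mono (Aseq_mono γ r h n0 f B hk') _ _))
    by_cases hlt : (mrep (Aseq γ r h n0 f B k') h (zseq (k' + 1))).encard < f (zseq (k' + 1))
    · refine ⟨k' + 1, ?_⟩
      rw [Aseq, if_pos (by rw [repFn_eq]; exact hlt), u1_succ, u2_succ]
      refine le_trans ?_ ((stepParams (n0 := n0) hh hR hγ k').lower (near_Aseq hh hR hγ f B k'))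
      push_cast
      gcongr
    · exact ⟨k', hN.trans (not_lt.mp hlt)⟩

lemma two_mul_lt_of_logb {h n0 r : ℕ} (hh : 2 ≤ h)
    (hr : 1 + Real.logb 2 ((h : ℝ) ^ 2 + (n0 : ℝ)) < (r : ℝ)) :
    2 * ((h : ℤ) ^ 2 + n0) < 2 ^ r := by
  have hx : (0 : ℝ) < (h : ℝ) ^ 2 + n0 := by positivity
  have h1 : Real.logb 2 (2 * ((h : ℝ) ^ 2 + n0)) < r := by
    rw [Real.logb_mul (by norm_num) hx.ne', Real.logb_self_eq_one (by norm_num)]; exact hr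
  rw [Real.logb_lt_iff_lt_rpow (by norm_num) (by positivity), Real.rpow_natCast] at h1
  exact_mod_cast h1

lemma exists_subset_of_finite {α : Type*} {A : ℕ → Set α} (hA : Monotone A) {S : Set α}
    (hS : S.Finite) (hSA : S ⊆ ⋃ k, A k) : ∃ k, S ⊆ A k := by
  lift S to Finset α using hS
  exact (directed_of_isDirected_le hA).exists_mem_subset_of_finset_subset_biUnion hSA

/-- Finitely many representations by the union of an increasing sequence of sets are all
representations by a single set of the sequence. -/
lemma exists_subset_mrep {A : ℕ → Set ℤ} (hA : Monotone A) (h : ℕ) (n : ℤ)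
    {S : Set (Multiset ℤ)} (hS : S.Finite) (hSA : S ⊆ mrep (⋃ k, A k) h n) :
    ∃ k, S ⊆ mrep (A k) h n := by
  have h1 : ∀ M ∈ S, ∃ k, M ∈ mrep (A k) h n := fun M hM => by
    obtain ⟨hc, hm, hs⟩ := hSA hM
    have hfin : {x | x ∈ M}.Finite := M.finite_toSet
    obtain ⟨k, hk⟩ := exists_subset_of_finite hA hfin hm
    exact ⟨k, hc, hk, hs⟩
  exact exists_subset_of_finite (fun i j hij => mrep_mono (hA hij) h n) hS
    fun M hM => Set.mem_iUnion.mpr (h1 M hM)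

/-- The set `A = ⋃_{k≥0} A_k` from the recursive construction satisfies
`r_{A,h}(n) = f(n)` for all integers `n`. -/
theorem stmt_14 (h g n0 r : ℕ) (hh : 2 ≤ h) (hg : 1 ≤ g) (hn0 : 1 ≤ n0)
    (f : ℤ → ℕ∞) (hf : ∀ n : ℤ, (n0 : ℤ) ≤ |n| → (g : ℕ∞) ≤ f n)
    (hr : 1 + Real.logb 2 ((h : ℝ) ^ 2 + (n0 : ℝ)) < (r : ℝ))
    (γ : ℕ → ℕ) (hγ : StrictMono γ) (hγ0 : γ 0 = 0)
    (B : Set ℕ) (hBpos : ∀ b ∈ B, 0 < b) (hB : ∀ n : ℕ, repFnN B h n ≤ g) :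
    ∀ n : ℤ, repFn (⋃ k : ℕ, Aseq γ r h n0 f B k) h n = f n := by
  have hR := two_mul_lt_of_logb hh hr
  simp only [repFnN_eq] at hB
  intro n
  rw [repFn_eq]
  apply le_antisymm
  · by_contra! hlt
    obtain ⟨N, hN⟩ := ENat.ne_top_iff_exists.mp hlt.ne_top
    obtain ⟨S, hS, hSc⟩ := Set.exists_subset_encard_eq (Order.add_one_le_of_lt hlt)
    rw [← hN] at hSc hlt
    have hfin : S.Finite := Set.finite_of_encard_eq_coe (k := N + 1) (by rw [hSc]; push_cast; rfl)
    obtain ⟨k, hk⟩ := exists_subset_mrep (Aseq_mono γ r h n0 f B) h n hfin hS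
    have h1 := (Set.encard_le_encard hk).trans
      ((Aseq_invariant hh hg hR hγ hγ0 hf hB k).2 n)
    rw [hSc, ← hN] at h1
    have h2 : N + 1 ≤ N := by exact_mod_cast h1
    omega
  · refine ENat.forall_natCast_le_iff_le.mp fun N hN => ?_
    obtain ⟨k, hk⟩ := exists_le_mrep hh hR hγ f B n N hN
    exact hk.trans (Set.encard_le_encard (mrep_mono (Set.subset_iUnion (Aseq γ r h n0 f B) k) h n))
end

section
/- Let γ : ℕ → ℕ be strictly increasing with γ(0) = 0, extended to a strictly increasing function γ : ℝ_{≥0} → ℝ_{≥0} by γ(x) = γ(k+1)(x−k) + γ(k)(k+1−x) for k ≤ x ≤ k+1, and let r be a positive integer. Let B be a set of positive integers. Then for all x ≥ 1, the number of elements of T_γ^r(B) that are at most x is at least the number of elements b ∈ B with b ≤ x·2^{−2r·γ^{−1}(log₂ x)}; indeed, every positive integer b with b ≤ x·2^{−2r·γ^{−1}(log₂ x)} satisfies T_γ^r(b) ≤ x. -/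
/-!
Write `b` as the sum of its digit blocks `S_k`, where `S_k` collects the binary digits of `b` with
index in `[γ k, γ (k + 1))`; then `T(b) = ∑ 2 ^ (2rk) S_k`.

Upper bound: put `N = ⌊y⌋`. From `b ≤ x = 2 ^ (γR γ y) < 2 ^ γ (N + 1)` every block beyond the
`N`-th vanishes, hence `T(b) ≤ 2 ^ (2rN) b ≤ 2 ^ (2ry) b ≤ x`.

Counting: `T` is injective (`insZeros_injective`), because the sum over the blocks `k < n` is less
than `2 ^ (2rn + γ n)`, while every later contribution is a multiple of that power, so the blocks
can be read off from `T(b)` one at a time. Thus `T` embeds the first counted set into the second,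
which is finite.
-/

open Filter Set

/-- The piecewise linear extension of `γ : ℕ → ℕ` to the nonnegative reals:
for `k ≤ x ≤ k + 1`, `γR γ x = γ(k+1)(x-k) + γ(k)(k+1-x)`. -/
noncomputable def γR (γ : ℕ → ℕ) (x : ℝ) : ℝ :=
  (γ (⌊x⌋₊ + 1) : ℝ) * (x - ⌊x⌋₊) + (γ ⌊x⌋₊ : ℝ) * (⌊x⌋₊ + 1 - x)

/-- The contribution to `b` of its binary digits with index in `[γ k, γ (k + 1))`. -/
def digitBlock (γ : ℕ → ℕ) (b k : ℕ) : ℕ :=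
  ∑ i ∈ Finset.Ico (γ k) (γ (k + 1)), (b / 2 ^ i % 2) * 2 ^ i

/-- The transformation applied to the blocks of `b` of index less than `n` only. -/
def insZerosTrunc (γ : ℕ → ℕ) (r n b : ℕ) : ℕ :=
  ∑ k ∈ Finset.range n, 2 ^ (2 * r * k) * digitBlock γ b k

theorem sum_range_digits (b m : ℕ) :
    ∑ i ∈ Finset.range m, (b / 2 ^ i % 2) * 2 ^ i = b % 2 ^ m := by
  induction m with
  | zero => simp [Nat.mod_one]
  | succ m ih => rw [Finset.sum_range_succ, ih, Nat.mod_pow_succ, mul_comm (2 ^ m)]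

theorem mod_add_digitBlock {γ : ℕ → ℕ} (hγ : StrictMono γ) (b k : ℕ) :
    b % 2 ^ γ k + digitBlock γ b k = b % 2 ^ γ (k + 1) := by
  rw [← sum_range_digits, ← sum_range_digits, digitBlock]
  exact Finset.sum_range_add_sum_Ico _ (hγ.monotone k.le_succ)

theorem sum_digitBlock {γ : ℕ → ℕ} (hγ : StrictMono γ) (hγ0 : γ 0 = 0) (b n : ℕ) :
    ∑ k ∈ Finset.range n, digitBlock γ b k = b % 2 ^ γ n := by
  induction n with
  | zero => simp [hγ0, Nat.mod_one]
  | succ n ih => rw [Finset.sum_range_succ, ih, mod_add_digitBlock hγ]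

theorem digitBlock_eq_zero {γ : ℕ → ℕ} {b k : ℕ} (h : b < 2 ^ γ k) : digitBlock γ b k = 0 := by
  refine Finset.sum_eq_zero fun i hi => ?_
  rw [Nat.div_eq_of_lt (h.trans_le (Nat.pow_le_pow_right two_pos (Finset.mem_Ico.1 hi).1))]
  simp

theorem dvd_digitBlock (γ : ℕ → ℕ) (b k : ℕ) : 2 ^ γ k ∣ digitBlock γ b k :=
  Finset.dvd_sum fun _ hi => Dvd.dvd.mul_left (pow_dvd_pow 2 (Finset.mem_Ico.1 hi).1) _

/-- If only blocks of index at most `N` contribute, the transformation multiplies the sum of these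
blocks by at most `2 ^ (2rN)`. -/
theorem insZerosTrunc_le {γ : ℕ → ℕ} (hγ : StrictMono γ) (hγ0 : γ 0 = 0) (r b n N : ℕ)
    (h : ∀ k < n, N < k → digitBlock γ b k = 0) :
    insZerosTrunc γ r n b ≤ 2 ^ (2 * r * N) * (b % 2 ^ γ n) := by
  rw [← sum_digitBlock hγ hγ0, Finset.mul_sum]
  refine Finset.sum_le_sum fun k hk => ?_
  rcases le_or_gt k N with hkN | hkN
  · exact Nat.mul_le_mul_right _ (Nat.pow_le_pow_right two_pos (Nat.mul_le_mul_left _ hkN))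
  · simp [h k (Finset.mem_range.1 hk) hkN]

theorem insZerosTrunc_lt {γ : ℕ → ℕ} (hγ : StrictMono γ) (hγ0 : γ 0 = 0) (r b n : ℕ) :
    insZerosTrunc γ r n b < 2 ^ (2 * r * n + γ n) := by
  rw [pow_add]
  exact (insZerosTrunc_le hγ hγ0 r b n n fun k h1 h2 => absurd h1 h2.le.not_gt).trans_lt
    (Nat.mul_lt_mul_of_pos_left (Nat.mod_lt _ (by positivity)) (by positivity))

/-- The truncated transformation determines the blocks on which it depends. -/
theorem mod_eq_of_insZerosTrunc_eq {γ : ℕ → ℕ} (hγ : StrictMono γ) (hγ0 : γ 0 = 0) (r a b n : ℕ)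
    (h : insZerosTrunc γ r n a = insZerosTrunc γ r n b) : a % 2 ^ γ n = b % 2 ^ γ n := by
  induction n with
  | zero => simp [hγ0, Nat.mod_one]
  | succ n ih =>
    obtain ⟨c, hc⟩ := dvd_digitBlock γ a n
    obtain ⟨d, hd⟩ := dvd_digitBlock γ b n
    have ha := insZerosTrunc_lt hγ hγ0 r a n
    have hb := insZerosTrunc_lt hγ hγ0 r b n
    have key : insZerosTrunc γ r n a + 2 ^ (2 * r * n + γ n) * c
        = insZerosTrunc γ r n b + 2 ^ (2 * r * n + γ n) * d := by
      simpa only [insZerosTrunc, Finset.sum_range_succ, hc, hd, pow_add, mul_assoc] using h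
    -- The truncated values are the remainders modulo `2 ^ (2rn + γ n)`.
    have h1 : insZerosTrunc γ r n a = insZerosTrunc γ r n b := by
      have := congrArg (· % 2 ^ (2 * r * n + γ n)) key
      simpa [Nat.add_mul_mod_self_left, Nat.mod_eq_of_lt ha, Nat.mod_eq_of_lt hb] using this
    have h2 : c = d := by
      rw [h1] at key
      exact Nat.eq_of_mul_eq_mul_left (by positivity) (Nat.add_left_cancel key)
    rw [← mod_add_digitBlock hγ, ← mod_add_digitBlock hγ, ih h1, hc, hd, h2]

theorem lt_two_pow_of_lt {γ : ℕ → ℕ} (hγ : StrictMono γ) {b n : ℕ} (h : b < n) :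
    b < 2 ^ γ n :=
  h.trans_le ((hγ.le_apply).trans Nat.lt_two_pow_self.le)

theorem insZeros_eq_trunc {γ : ℕ → ℕ} (hγ : StrictMono γ) (r : ℕ) {b n : ℕ} (h : b < n) :
    insZeros γ r b = insZerosTrunc γ r n b := by
  change insZerosTrunc γ r (b + 1) b = _
  refine Finset.sum_subset (Finset.range_mono h) fun k _ hk => ?_
  rw [digitBlock_eq_zero (lt_two_pow_of_lt hγ (by simpa using hk)), mul_zero]

theorem insZeros_injective {γ : ℕ → ℕ} (hγ : StrictMono γ) (hγ0 : γ 0 = 0) (r : ℕ) :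
    Function.Injective (insZeros γ r) := by
  intro a b h
  have ha : a < a + b + 1 := by omega
  have hb : b < a + b + 1 := by omega
  rw [insZeros_eq_trunc hγ r ha, insZeros_eq_trunc hγ r hb] at h
  have := mod_eq_of_insZerosTrunc_eq hγ hγ0 r a b _ h
  rwa [Nat.mod_eq_of_lt (lt_two_pow_of_lt hγ ha), Nat.mod_eq_of_lt (lt_two_pow_of_lt hγ hb)] at this

theorem γR_lt {γ : ℕ → ℕ} (hγ : StrictMono γ) (y : ℝ) : γR γ y < γ (⌊y⌋₊ + 1) := by
  have h1 := Nat.lt_floor_add_one y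
  have h2 : (γ ⌊y⌋₊ : ℝ) < γ (⌊y⌋₊ + 1) := by exact_mod_cast hγ (Nat.lt_succ_self _)
  unfold γR
  nlinarith

/-- Every `b` with `b ≤ x * 2 ^ (-2ry)`, where `γR γ y = log₂ x`, is sent to a value at most `x`. -/
theorem insZeros_le {γ : ℕ → ℕ} (hγ : StrictMono γ) (hγ0 : γ 0 = 0) (r : ℕ)
    {x : ℝ} (hx : 1 ≤ x) {y : ℝ} (hy : 0 ≤ y) (hxy : γR γ y = Real.logb 2 x) (b : ℕ)
    (hb : (b : ℝ) ≤ x * (2 : ℝ) ^ (-(2 * (r : ℝ)) * y)) : (insZeros γ r b : ℝ) ≤ x := by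
  have hx0 : 0 < x := by linarith
  have hr : (0 : ℝ) ≤ r := Nat.cast_nonneg r
  have hbx : (b : ℝ) ≤ x := by
    refine hb.trans (mul_le_of_le_one_right hx0.le ?_)
    exact Real.rpow_le_one_of_one_le_of_nonpos one_le_two (by nlinarith [mul_nonneg hr hy])
  have hxlt : x < 2 ^ γ (⌊y⌋₊ + 1) := by
    have h := γR_lt hγ y
    rwa [hxy, Real.logb_lt_iff_lt_rpow one_lt_two hx0, Real.rpow_natCast] at h
  have hblt : b < 2 ^ γ (⌊y⌋₊ + 1) := by exact_mod_cast hbx.trans_lt hxlt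
  have hT : insZeros γ r b ≤ 2 ^ (2 * r * ⌊y⌋₊) * b :=
    (insZerosTrunc_le hγ hγ0 r b (b + 1) ⌊y⌋₊ fun k _ hk => digitBlock_eq_zero
      (hblt.trans_le (Nat.pow_le_pow_right two_pos (hγ.monotone hk)))).trans
      (Nat.mul_le_mul_left _ (Nat.mod_le _ _))
  calc (insZeros γ r b : ℝ) ≤ 2 ^ (2 * r * ⌊y⌋₊) * b := by exact_mod_cast hT
    _ ≤ (2 : ℝ) ^ (2 * (r : ℝ) * y) * b := by
        refine mul_le_mul_of_nonneg_right ?_ (Nat.cast_nonneg b)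
        rw [← Real.rpow_natCast]
        refine Real.rpow_le_rpow_of_exponent_le one_le_two ?_
        push_cast
        exact mul_le_mul_of_nonneg_left (Nat.floor_le hy) (by positivity)
    _ ≤ (2 : ℝ) ^ (2 * (r : ℝ) * y) * (x * (2 : ℝ) ^ (-(2 * (r : ℝ)) * y)) := by gcongr
    _ = x := by
        rw [mul_left_comm, ← Real.rpow_add two_pos]
        simp

/-- Every positive integer `b ≤ x·2^{-2r·γ⁻¹(log₂ x)}` satisfies `T_γ^r(b) ≤ x`;
consequently `T_γ^r(B)(x) ≥ B(x·2^{-2r·γ⁻¹(log₂ x)})`.  Here `y = γ⁻¹(log₂ x)` is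
expressed by the hypothesis `γR γ y = log₂ x`. -/
theorem stmt_15 (γ : ℕ → ℕ) (hγ : StrictMono γ) (hγ0 : γ 0 = 0)
    (r : ℕ) (hr : 0 < r)
    (B : Set ℕ) (hBpos : ∀ b ∈ B, 0 < b)
    (x : ℝ) (hx : 1 ≤ x) (y : ℝ) (hy : 0 ≤ y) (hxy : γR γ y = Real.logb 2 x) :
    (∀ b : ℕ, 0 < b → (b : ℝ) ≤ x * (2 : ℝ) ^ (-(2 * (r : ℝ)) * y) →
        (insZeros γ r b : ℝ) ≤ x) ∧
      {b : ℕ | b ∈ B ∧ (b : ℝ) ≤ x * (2 : ℝ) ^ (-(2 * (r : ℝ)) * y)}.ncard ≤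
        {a : ℕ | a ∈ insZeros γ r '' B ∧ (a : ℝ) ≤ x}.ncard := by
  refine ⟨fun b _ hb => insZeros_le hγ hγ0 r hx hy hxy b hb, ?_⟩
  -- `ncard` of an infinite set is `0`, so finiteness of the target set is needed.
  have hfin : {a : ℕ | a ∈ insZeros γ r '' B ∧ (a : ℝ) ≤ x}.Finite :=
    (Set.finite_Iic ⌊x⌋₊).subset fun a ha => Nat.le_floor ha.2
  exact Set.ncard_le_ncard_of_injOn (insZeros γ r)
    (fun b hb => ⟨Set.mem_image_of_mem _ hb.1, insZeros_le hγ hγ0 r hx hy hxy b hb.2⟩)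
    (insZeros_injective hγ hγ0 r).injOn hfin
end

section
/- Let h ≥ 2 be an integer. For any increasing function ω : [1,∞) → (0,∞) tending to infinity there exists a B_h sequence B of nonnegative integers such that limsup_{x→∞} B(x)·ω(x)/x^{1/h} > 1. -/
/-!
The proof glues infinitely many finite Bose–Chowla sets together.

* `exists_boseChowla`: for a prime `p` there are integers `d a < p ^ h`, one for each
  `a ∈ ℤ/p`, whose sums of `j ≤ h` terms are all distinct. If `θ` generates `𝔽_{p^h}` over `𝔽_p`,
  take `d a` to be the discrete logarithm of `θ - a`: equal sums give
  `∏ (θ - aᵢ) = ∏ (θ - bᵢ)`, and since `θ` has degree `h` the two monic polynomials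
  `∏ (X - aᵢ)` and `∏ (X - bᵢ)` of the same degree `j ≤ h` coincide.
* `IsBh.union`: any `B_h` set `F ⊆ [0, M]` stays `B_h` after adjoining the integers `t + L * d a`,
  where `t = hM + 1` and `L = ht + hM + 1`. Indeed a sum of at most `h` elements determines
  modulo `L` the number of new summands and the sum of the old ones, hence also the sum of the
  `d a`.
* `exists_step`: the integers `t`, `L` depend only on `F`, so for a large prime `p` the enlarged set
  has at least `p` elements up to `x = t + L * p ^ h`, while `x ^ (1/h) ≤ (t + L) * p`. As
  `ω x → ∞`, the factor `ω x` beats the constant `t + L`.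

Iterating the step gives an increasing chain of finite `B_h` sets whose union is the sequence
wanted.
-/

open Filter Set

/-- `countNLe B x` is the number of `b ∈ B` with `b ≤ x`. -/
noncomputable def countNLe (B : Set ℕ) (x : ℝ) : ℕ :=
  {b : ℕ | b ∈ B ∧ (b : ℝ) ≤ x}.ncard

/-- A set of naturals is `B_h` if multisets of the same size `≤ h` drawn from it are determined by
their sums. Sizes below `h` are allowed so that sums mixing old and new elements can be compared
part by part. -/
def IsBh (h : ℕ) (S : Set ℕ) : Prop :=
  ∀ s t : Multiset ℕ, (∀ x ∈ s, x ∈ S) → (∀ x ∈ t, x ∈ S) →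
    Multiset.card s = Multiset.card t → Multiset.card s ≤ h → s.sum = t.sum → s = t

lemma IsBh.repFnN_le_one {h : ℕ} {B : Set ℕ} (hB : IsBh h B) (n : ℕ) : repFnN B h n ≤ 1 := by
  unfold repFnN
  rw [Set.encard_le_one_iff]
  rintro a b ⟨ha, haB, has⟩ ⟨hb, hbB, hbs⟩
  have key : (List.ofFn a : Multiset ℕ) = (List.ofFn b : Multiset ℕ) := by
    apply hB
    · intro x hx
      simp only [Multiset.mem_coe, List.mem_ofFn] at hx
      obtain ⟨i, rfl⟩ := hx
      exact haB i
    · intro x hx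
      simp only [Multiset.mem_coe, List.mem_ofFn] at hx
      obtain ⟨i, rfl⟩ := hx
      exact hbB i
    · simp
    · simp
    · simp only [Multiset.sum_coe, List.sum_ofFn]
      rw [has, hbs]
  exact List.ofFn_injective
    ((Multiset.coe_eq_coe.mp key).eq_of_sortedLE ha.sortedLE_ofFn hb.sortedLE_ofFn)

lemma isBh_iUnion {h : ℕ} {B : ℕ → Set ℕ} (hm : Monotone B) (hB : ∀ n, IsBh h (B n)) :
    IsBh h (⋃ n, B n) := by
  have aux : ∀ s : Multiset ℕ, (∀ x ∈ s, x ∈ ⋃ n, B n) → ∃ n, ∀ x ∈ s, x ∈ B n := by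
    intro s
    induction s using Multiset.induction with
    | empty => simp
    | cons a s ih =>
      intro hs
      obtain ⟨n, hn⟩ := ih fun x hx => hs x (Multiset.mem_cons_of_mem hx)
      obtain ⟨m, hm'⟩ := Set.mem_iUnion.mp (hs a (Multiset.mem_cons_self a s))
      refine ⟨max m n, fun x hx => ?_⟩
      rcases Multiset.mem_cons.mp hx with rfl | hx
      · exact hm (le_max_left _ _) hm'
      · exact hm (le_max_right _ _) (hn x hx)
  intro s t hs ht
  obtain ⟨n, hn⟩ := aux s hs
  obtain ⟨m, hm'⟩ := aux t ht
  exact hB (max n m) s t (fun x hx => hm (le_max_left _ _) (hn x hx))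
    (fun x hx => hm (le_max_right _ _) (hm' x hx))

open Polynomial in
/-- Bose–Chowla: `p` integers below `p ^ h`, indexed by `ZMod p`, for which multisets of the same
size at most `h` are determined by their sums. -/
lemma exists_boseChowla (h : ℕ) (hh : 2 ≤ h) (p : ℕ) [Fact p.Prime] :
    ∃ d : ZMod p → ℕ, (∀ a, d a < p ^ h) ∧
      ∀ s t : Multiset (ZMod p), Multiset.card s = Multiset.card t → Multiset.card s ≤ h →
        (s.map d).sum = (t.map d).sum → s = t := by
  classical
  let K := GaloisField p h
  obtain ⟨θ, hθ⟩ := Field.exists_primitive_element (ZMod p) K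
  have hdeg : (minpoly (ZMod p) θ).natDegree = h := by
    rw [(Field.primitive_element_iff_minpoly_natDegree_eq (ZMod p) θ).mp hθ]
    exact GaloisField.finrank p (by omega)
  have hint : IsIntegral (ZMod p) θ := IsIntegral.of_finite _ _
  -- a nonzero polynomial of degree below `h` does not vanish at `θ`
  have hsmall : ∀ f : (ZMod p)[X], f.degree < h → aeval θ f = 0 → f = 0 := by
    intro f hf h0
    by_contra hne
    have h1 := minpoly.degree_le_of_ne_zero (ZMod p) θ hne h0
    rw [degree_eq_natDegree (minpoly.ne_zero hint), hdeg] at h1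
    exact absurd hf (not_lt.mpr h1)
  have hne : ∀ a : ZMod p, θ - algebraMap (ZMod p) K a ≠ 0 := by
    intro a h0
    refine X_sub_C_ne_zero a (hsmall (X - C a) ?_ (by simpa using h0))
    rw [degree_X_sub_C]
    exact_mod_cast (show 1 < h by omega)
  obtain ⟨g, hg⟩ := IsCyclic.exists_generator (α := Kˣ)
  have hcard : Nat.card K = p ^ h := GaloisField.card p h (by omega)
  have hlog : ∀ u : Kˣ, ∃ n, n < p ^ h ∧ g ^ n = u := by
    intro u
    have h1 : u ∈ Submonoid.powers g := mem_powers_iff_mem_zpowers.mpr (hg u)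
    rw [mem_powers_iff_mem_range_orderOf] at h1
    obtain ⟨n, hn, rfl⟩ := Finset.mem_image.mp h1
    refine ⟨n, ?_, rfl⟩
    calc n < orderOf g := Finset.mem_range.mp hn
      _ ≤ Nat.card Kˣ := orderOf_le_card
      _ ≤ Nat.card K := Nat.card_le_card_of_injective _ Units.val_injective
      _ = p ^ h := hcard
  choose lg hlg1 hlg2 using hlog
  let d : ZMod p → ℕ := fun a => lg (Units.mk0 _ (hne a))
  have hd : ∀ a, (g : K) ^ d a = θ - algebraMap (ZMod p) K a := by
    intro a
    have := congrArg Units.val (hlg2 (Units.mk0 _ (hne a)))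
    simpa using this
  have hprod : ∀ s : Multiset (ZMod p),
      aeval θ (s.map fun a => X - C a).prod = (g : K) ^ (s.map d).sum := by
    intro s
    induction s using Multiset.induction with
    | empty => simp
    | cons a s ih =>
      rw [Multiset.map_cons, Multiset.prod_cons, map_mul, ih, Multiset.map_cons,
        Multiset.sum_cons, pow_add, hd]
      simp
  refine ⟨d, fun a => hlg1 _, fun s t hst hs hsum => ?_⟩
  have hmon : ∀ s : Multiset (ZMod p), (s.map fun a => X - C a).prod.Monic := fun s =>
    monic_multiset_prod_of_monic _ _ fun a _ => monic_X_sub_C a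
  have hdg : ∀ s : Multiset (ZMod p),
      (s.map fun a => X - C a).prod.degree = (Multiset.card s : WithBot ℕ) := fun s => by
    rw [degree_eq_natDegree (hmon s).ne_zero, natDegree_multiset_prod_X_sub_C_eq_card]
  have hpq : (s.map fun a => X - C a).prod = (t.map fun a => X - C a).prod := by
    rw [← sub_eq_zero]
    apply hsmall
    · calc _ < (s.map fun a => X - C a).prod.degree :=
            degree_sub_lt_left (by rw [hdg, hdg, hst]) (hmon s).ne_zero
              (by rw [(hmon s).leadingCoeff, (hmon t).leadingCoeff])
        _ ≤ (h : WithBot ℕ) := by rw [hdg]; exact_mod_cast hs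
    · rw [map_sub, hprod, hprod, hsum, sub_self]
  rw [← roots_multiset_prod_X_sub_C s, hpq, roots_multiset_prod_X_sub_C]

lemma exists_decomp {ι : Type*} (F : Set ℕ) (φ : ι → ℕ) (s : Multiset ℕ)
    (hs : ∀ x ∈ s, x ∈ F ∪ Set.range φ) :
    ∃ (u : Multiset ℕ) (v : Multiset ι), (∀ x ∈ u, x ∈ F) ∧ s = u + v.map φ := by
  induction s using Multiset.induction with
  | empty => exact ⟨0, 0, by simp, by simp⟩
  | cons a s ih =>
    obtain ⟨u, v, hu, rfl⟩ := ih fun x hx => hs x (Multiset.mem_cons_of_mem hx)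
    rcases hs a (Multiset.mem_cons_self a _) with ha | ⟨i, rfl⟩
    · refine ⟨a ::ₘ u, v, fun x hx => ?_, by simp⟩
      rcases Multiset.mem_cons.mp hx with rfl | hx
      · exact ha
      · exact hu x hx
    · exact ⟨u, i ::ₘ v, hu, by simp⟩

/-- Elements of an indexed family satisfying the `B_h` condition, rescaled by a large `L` and
shifted by a large `t`, can be adjoined to a bounded `B_h` set. -/
lemma IsBh.union {ι : Type*} {h M t L : ℕ} {F : Set ℕ} (hF : IsBh h F) (hM : ∀ x ∈ F, x ≤ M)
    (d : ι → ℕ)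
    (hd : ∀ s t : Multiset ι, Multiset.card s = Multiset.card t → Multiset.card s ≤ h →
        (s.map d).sum = (t.map d).sum → s = t)
    (ht : h * M < t) (hL : h * t + h * M < L) :
    IsBh h (F ∪ Set.range fun i => t + L * d i) := by
  intro s s' hs hs' hcard hh hsum
  obtain ⟨u, v, hu, rfl⟩ := exists_decomp F _ s hs
  obtain ⟨u', v', hu', rfl⟩ := exists_decomp F _ s' hs'
  have hv : ∀ v : Multiset ι, (v.map fun i => t + L * d i).sum =
      Multiset.card v * t + L * (v.map d).sum := by
    intro v
    rw [Multiset.sum_map_add, Multiset.sum_map_mul_left]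
    simp
  simp only [Multiset.card_add, Multiset.card_map] at hcard hh
  simp only [Multiset.sum_add, hv] at hsum
  have hub : ∀ u : Multiset ℕ, (∀ x ∈ u, x ∈ F) → Multiset.card u ≤ h → u.sum ≤ h * M := by
    intro u hu hc
    calc u.sum ≤ Multiset.card u • M := Multiset.sum_le_card_nsmul u M fun x hx => hM x (hu x hx)
      _ ≤ h * M := by rw [smul_eq_mul]; gcongr
  have h1 := hub u hu (by omega)
  have h2 := hub u' hu' (by omega)
  have h3 : Multiset.card v * t ≤ h * t := by gcongr; omega
  have h4 : Multiset.card v' * t ≤ h * t := by gcongr; omega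
  -- reduction modulo `L`, then division by `t`
  have e1 : u.sum + Multiset.card v * t = u'.sum + Multiset.card v' * t := by
    have := congrArg (· % L) hsum
    simp only [← add_assoc, Nat.add_mul_mod_self_left] at this
    rwa [Nat.mod_eq_of_lt (by omega), Nat.mod_eq_of_lt (by omega)] at this
  have e2 : L * (v.map d).sum = L * (v'.map d).sum := by omega
  have e3 : (v.map d).sum = (v'.map d).sum := Nat.eq_of_mul_eq_mul_left (by omega) e2
  have e4 : Multiset.card v = Multiset.card v' := by
    have := congrArg (· / t) e1
    simp only [Nat.add_mul_div_right _ _ (show 0 < t by omega)] at this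
    rwa [Nat.div_eq_of_lt (by omega), Nat.div_eq_of_lt (by omega), zero_add, zero_add] at this
  have e5 : u.sum = u'.sum := by rw [e4] at e1; omega
  rw [hF u u' hu hu' (by omega) (by omega) e5, hd v v' e4 (by omega) e3]

lemma le_countNLe {B : Set ℕ} {x : ℝ} {G : Finset ℕ} (hG : ∀ b ∈ G, b ∈ B ∧ (b : ℝ) ≤ x) :
    G.card ≤ countNLe B x := by
  unfold countNLe
  rw [← Set.ncard_coe_finset]
  refine Set.ncard_le_ncard (fun b hb => hG b hb) ?_
  refine (Set.finite_Iic ⌊x⌋₊).subset fun b hb => ?_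
  exact Nat.le_floor hb.2

/-- A finite `B_h` set extends to one that is dense, relative to `ω`, at some point beyond `N`. The
density is recorded through an arbitrary superset `B`, as it will be used for the final union. -/
lemma exists_step (h : ℕ) (hh : 2 ≤ h) (ω : ℝ → ℝ) (hωlim : Tendsto ω atTop atTop)
    (F : Finset ℕ) (hF : IsBh h (F : Set ℕ)) (N : ℕ) :
    ∃ F' : Finset ℕ, F ⊆ F' ∧ IsBh h (F' : Set ℕ) ∧ ∃ x : ℝ, N ≤ x ∧
      ∀ B : Set ℕ, (F' : Set ℕ) ⊆ B → 2 ≤ (countNLe B x : ℝ) * ω x / x ^ ((1 : ℝ) / h) := by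
  classical
  obtain ⟨M, hM⟩ : ∃ M, ∀ x ∈ F, x ≤ M := ⟨F.sup id, fun x hx => Finset.le_sup (f := id) hx⟩
  obtain ⟨t, ht⟩ : ∃ t, t = h * M + 1 := ⟨_, rfl⟩
  obtain ⟨L, hL⟩ : ∃ L, L = h * t + h * M + 1 := ⟨_, rfl⟩
  obtain ⟨X, hX⟩ := (tendsto_atTop.mp hωlim (2 * (t + L))).exists_forall_of_atTop
  obtain ⟨p, hp, hpp⟩ := Nat.exists_infinite_primes (max N ⌈X⌉₊)
  have : Fact p.Prime := ⟨hpp⟩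
  obtain ⟨d, hdlt, hd⟩ := exists_boseChowla h hh p
  have hinj : Function.Injective fun a => t + L * d a := by
    intro a b hab
    have hab' : d a = d b :=
      Nat.eq_of_mul_eq_mul_left (show 0 < L by omega) (Nat.add_left_cancel hab)
    simpa using hd {a} {b} (by simp) (by simp; omega) (by simpa using hab')
  let G : Finset ℕ := Finset.univ.image fun a => t + L * d a
  have hGc : G.card = p := by
    rw [Finset.card_image_of_injective _ hinj, Finset.card_univ, ZMod.card]
  refine ⟨F ∪ G, Finset.subset_union_left, ?_, ((t + L * p ^ h : ℕ) : ℝ), ?_, ?_⟩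
  · have := hF.union (fun x hx => hM x hx) d hd (show h * M < t by omega)
      (show h * t + h * M < L by omega)
    simpa [G] using this
  · have h1 : p ≤ p ^ h := Nat.le_self_pow (by omega) p
    have h2 : p ^ h ≤ L * p ^ h := Nat.le_mul_of_pos_left _ (by omega)
    exact_mod_cast (by omega : N ≤ t + L * p ^ h)
  · intro B hB
    have hppos : (0 : ℝ) < p := by exact_mod_cast hpp.pos
    have hcount : (p : ℝ) ≤ countNLe B ((t + L * p ^ h : ℕ) : ℝ) := by
      rw [← hGc]
      refine Nat.cast_le.mpr (le_countNLe fun b hb => ⟨hB (by simp [hb]), ?_⟩)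
      obtain ⟨a, -, rfl⟩ := Finset.mem_image.mp hb
      have := (hdlt a).le
      rw [hGc]
      exact_mod_cast (by gcongr : t + L * d a ≤ t + L * p ^ h)
    have hωx : 2 * ((t : ℝ) + L) ≤ ω ((t + L * p ^ h : ℕ) : ℝ) := by
      apply hX
      have h1 : p ≤ p ^ h := Nat.le_self_pow (by omega) p
      have h2 : p ^ h ≤ L * p ^ h := Nat.le_mul_of_pos_left _ (by omega)
      calc X ≤ ⌈X⌉₊ := Nat.le_ceil X
        _ ≤ _ := by exact_mod_cast (by omega : ⌈X⌉₊ ≤ t + L * p ^ h)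
    have htL : (1 : ℝ) ≤ t + L := by exact_mod_cast (by omega : 1 ≤ t + L)
    have hroot : (((t + L * p ^ h : ℕ) : ℝ)) ^ ((1 : ℝ) / h) ≤ (t + L) * p := by
      rw [one_div, Real.rpow_inv_le_iff_of_pos (by positivity) (by positivity)
        (by exact_mod_cast (by omega : 0 < h)), Real.rpow_natCast, mul_pow]
      have h1 : (1 : ℝ) ≤ (p : ℝ) ^ h := one_le_pow₀ (by exact_mod_cast hpp.one_lt.le)
      have h2 : (t : ℝ) + L ≤ (t + L) ^ h := le_self_pow₀ htL (by omega)
      push_cast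
      calc (t : ℝ) + L * p ^ h ≤ t * p ^ h + L * p ^ h := by
            gcongr
            exact le_mul_of_one_le_right (by positivity) h1
        _ = (t + L) * p ^ h := by ring
        _ ≤ (t + L) ^ h * p ^ h := by gcongr
    have hxpos : (0 : ℝ) < ((t + L * p ^ h : ℕ) : ℝ) := by
      exact_mod_cast (by omega : 0 < t + L * p ^ h)
    rw [le_div_iff₀ (Real.rpow_pos_of_pos hxpos _)]
    calc _ ≤ 2 * ((t + L) * (p : ℝ)) := by gcongr
      _ = p * (2 * (t + L)) := by ring
      _ ≤ _ := by gcongr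

/-- For any increasing `ω : [1,∞) → (0,∞)` tending to infinity there is a `B_h`
sequence `B` of nonnegative integers with `limsup_{x→∞} B(x)·ω(x)/x^{1/h} > 1`
(the limsup is taken in `[0,∞]`). -/
theorem stmt_16 (h : ℕ) (hh : 2 ≤ h)
    (ω : ℝ → ℝ) (hωpos : ∀ x : ℝ, 1 ≤ x → 0 < ω x)
    (hωmono : MonotoneOn ω (Set.Ici (1 : ℝ)))
    (hωlim : Filter.Tendsto ω Filter.atTop Filter.atTop) :
    ∃ B : Set ℕ, (∀ n : ℕ, repFnN B h n ≤ 1) ∧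
      1 < Filter.limsup
            (fun x : ℝ => ENNReal.ofReal ((countNLe B x : ℝ) * ω x / x ^ ((1 : ℝ) / h)))
            Filter.atTop := by
  choose next hsub hBh x hNx hx using fun (P : {F : Finset ℕ // IsBh h (F : Set ℕ)}) (N : ℕ) =>
    exists_step h hh ω hωlim P.1 P.2 N
  have h0 : IsBh h ((∅ : Finset ℕ) : Set ℕ) := by
    intro s t hs ht _ _ _
    have hs0 : s = 0 := Multiset.eq_zero_of_forall_notMem fun x hx => by simpa using hs x hx
    have ht0 : t = 0 := Multiset.eq_zero_of_forall_notMem fun x hx => by simpa using ht x hx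
    rw [hs0, ht0]
  let C : ℕ → {F : Finset ℕ // IsBh h (F : Set ℕ)} := fun n =>
    Nat.rec ⟨∅, h0⟩ (fun k P => ⟨next P k, hBh P k⟩) n
  have hmono : Monotone fun n => ((C n).1 : Set ℕ) :=
    monotone_nat_of_le_succ fun n => Finset.coe_subset.mpr (hsub (C n) n)
  refine ⟨⋃ n, ((C n).1 : Set ℕ), (isBh_iUnion hmono fun n => (C n).2).repFnN_le_one, ?_⟩
  refine lt_of_lt_of_le (b := (2 : ENNReal)) (by norm_num) (le_limsup_of_frequently_le' ?_)
  rw [frequently_atTop]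
  intro a
  refine ⟨x (C ⌈a⌉₊) ⌈a⌉₊, (Nat.le_ceil a).trans (hNx _ _), ?_⟩
  have := hx (C ⌈a⌉₊) ⌈a⌉₊ (⋃ n, ((C n).1 : Set ℕ))
    (Set.subset_iUnion (fun n => ((C n).1 : Set ℕ)) (⌈a⌉₊ + 1))
  simpa using ENNReal.ofReal_le_ofReal this
end
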